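/- arXiv:1904.10919 — 2 statements merged into one kernel-verified Lean document; each statement's English description precedes it below -/
import Mathlib

section
/- Let n ≥ 2 and let X be B or C; let A be the Cartan matrix of type X_n and ι an admissible sequence adapted to A. Then the set Tab_{X,ι} of column tableaux of type X is closed under the action of all operators S_{m,j}: for every T ∈ Tab_{X,ι}, every m ≥ 1 and every j ∈ I, one has S_{m,j}T ∈ Tab_{X,ι}. -/
noncomputable section

/-- The coordinate linear form `x_k` (as a coefficient vector). -/
def xc (k : ℕ) : ℕ → ℚ := fun l => if l = k then 1 else 0

/-- Cartan matrix of type `A_n`. -/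
def cartanA (_n : ℕ) (i j : ℕ) : ℤ :=
  if i = j then 2 else if i + 1 = j ∨ j + 1 = i then -1 else 0

/-- Cartan matrix of type `B_n`. -/
def cartanB (n : ℕ) (i j : ℕ) : ℤ :=
  if i = j then 2
  else if i = n ∧ j = n - 1 then -2
  else if i + 1 = j ∨ j + 1 = i then -1 else 0

/-- Cartan matrix of type `C_n`. -/
def cartanC (n : ℕ) (i j : ℕ) : ℤ :=
  if i = j then 2
  else if i = n - 1 ∧ j = n then -2
  else if i + 1 = j ∨ j + 1 = i then -1 else 0

/-- Cartan matrix of type `D_n`. -/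
def cartanD (n : ℕ) (i j : ℕ) : ℤ :=
  if i = j then 2
  else if (i = n - 1 ∧ j = n) ∨ (i = n ∧ j = n - 1) then 0
  else if (i + 1 = j ∨ j + 1 = i) ∨ (i = n ∧ j = n - 2) ∨ (i = n - 2 ∧ j = n) then -1
  else 0

/-- `ι` (with positions indexed by `k ≥ 1`) takes values in `{1,…,n}`, has no two equal
consecutive entries, and every index occurs infinitely often. -/
def Admissible (n : ℕ) (ι : ℕ → ℕ) : Prop :=
  (∀ k, 1 ≤ k → 1 ≤ ι k ∧ ι k ≤ n) ∧
  (∀ k, 1 ≤ k → ι k ≠ ι (k + 1)) ∧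
  (∀ i, 1 ≤ i → i ≤ n → ∀ N, ∃ k, N ≤ k ∧ ι k = i)

/-- `k^+`: the next position after `k` carrying the same letter. -/
def kplus (ι : ℕ → ℕ) (k : ℕ) : ℕ := sInf {l | k < l ∧ ι l = ι k}

/-- `k^-`: the previous position (`≥ 1`) carrying the same letter, `0` if none. -/
def kminus (ι : ℕ → ℕ) (k : ℕ) : ℕ := sSup {l | 0 < l ∧ l < k ∧ ι l = ι k}

/-- The linear form `β_k` (with `β_0 = 0`). -/
def beta (A : ℕ → ℕ → ℤ) (ι : ℕ → ℕ) (k : ℕ) : ℕ → ℚ :=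
  if k = 0 then 0
  else xc k + (∑ j ∈ Finset.Ioo k (kplus ι k), (A (ι k) (ι j) : ℚ) • xc j) + xc (kplus ι k)

/-- The piecewise-linear operator `S_k`. -/
def Sop (A : ℕ → ℕ → ℤ) (ι : ℕ → ℕ) (k : ℕ) (φ : ℕ → ℚ) : ℕ → ℚ :=
  if 0 < φ k then φ - φ k • beta A ι k
  else φ - φ k • beta A ι (kminus ι k)

/-- Membership in `Ξ_ι`: forms obtained from some `x_{j_0}` by finitely many operators `S_k`. -/
inductive XiMem (A : ℕ → ℕ → ℤ) (ι : ℕ → ℕ) : (ℕ → ℚ) → Prop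
  | base (k : ℕ) (hk : 1 ≤ k) : XiMem A ι (xc k)
  | step (k : ℕ) (hk : 1 ≤ k) (φ : ℕ → ℚ) (h : XiMem A ι φ) : XiMem A ι (Sop A ι k φ)

/-- The set `Ξ_ι`. -/
def Xi (A : ℕ → ℕ → ℤ) (ι : ℕ → ℕ) : Set (ℕ → ℚ) := { φ | XiMem A ι φ }

/-- Forms obtained from a set `g` of generators by finitely many operators `S_k`. -/
inductive XiMemFrom (A : ℕ → ℕ → ℤ) (ι : ℕ → ℕ) (g : Set (ℕ → ℚ)) : (ℕ → ℚ) → Prop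
  | base (φ : ℕ → ℚ) (h : φ ∈ g) : XiMemFrom A ι g φ
  | step (k : ℕ) (hk : 1 ≤ k) (φ : ℕ → ℚ) (h : XiMemFrom A ι g φ) :
      XiMemFrom A ι g (Sop A ι k φ)

/-- `ι` is adapted to the Cartan matrix `A`: for `i ≠ j` with `a_{i,j} ≠ 0`, consecutive
members of the subsequence of `ι` consisting of the letters `i`, `j` are distinct. -/
def Adapted (n : ℕ) (A : ℕ → ℕ → ℤ) (ι : ℕ → ℕ) : Prop :=
  ∀ i j, 1 ≤ i → i ≤ n → 1 ≤ j → j ≤ n → i ≠ j → A i j ≠ 0 →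
    ∀ k l, 1 ≤ k → k < l → (ι k = i ∨ ι k = j) → (ι l = i ∨ ι l = j) →
      (∀ m, k < m → m < l → ι m ≠ i ∧ ι m ≠ j) → ι k ≠ ι l

/-- Position of the first occurrence of the letter `i` in `ι`. -/
def firstOcc (ι : ℕ → ℕ) (i : ℕ) : ℕ := sInf {k | 1 ≤ k ∧ ι k = i}

/-- `p_{i,j} = 1` iff the first occurrence of `i` precedes the first occurrence of `j`. -/
def pval (ι : ℕ → ℕ) (i j : ℕ) : ℕ := if firstOcc ι i < firstOcc ι j then 1 else 0

/-- The function `P(k)` for types A, B, C (and `P(k) = 0` for `k > n`, `k ≤ 1`). -/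
def PABC (ι : ℕ → ℕ) (n k : ℕ) : ℕ :=
  if k ≤ n then ∑ t ∈ Finset.Icc 2 k, pval ι t (t - 1) else 0

/-- The function `P(k)` for type D. -/
def PD (ι : ℕ → ℕ) (n k : ℕ) : ℕ :=
  if k = n then (∑ t ∈ Finset.Icc 2 (n - 2), pval ι t (t - 1)) + pval ι n (n - 2)
  else if k ≤ n then ∑ t ∈ Finset.Icc 2 k, pval ι t (t - 1) else 0

/-- `occPos ι j s`: the position of the `s`-th occurrence of the letter `j` in `ι`
(`0` for `s = 0`). -/
def occPos (ι : ℕ → ℕ) (j : ℕ) : ℕ → ℕ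
  | 0 => 0
  | s + 1 => sInf {k | occPos ι j s < k ∧ ι k = j}

/-- The double-indexed coordinate form `x_{s,j}`, with the conventions
`x_{s,0} = x_{s,n+1} = 0` and `x_{s,j} = 0` for `s ≤ 0`. -/
def xsj (ι : ℕ → ℕ) (n : ℕ) (s : ℤ) (j : ℕ) : ℕ → ℚ :=
  if 1 ≤ s ∧ 1 ≤ j ∧ j ≤ n then xc (occPos ι j s.toNat) else 0

/-- The double-indexed form `β_{s,j}`. -/
def betasj (A : ℕ → ℕ → ℤ) (ι : ℕ → ℕ) (s : ℤ) (j : ℕ) : ℕ → ℚ :=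
  beta A ι (occPos ι j s.toNat)

/-- The double-indexed operator `S_{m,j}`. -/
def Ssj (A : ℕ → ℕ → ℤ) (ι : ℕ → ℕ) (m j : ℕ) (φ : ℕ → ℚ) : ℕ → ℚ :=
  Sop A ι (occPos ι j m) φ

/- Entries of the ordered sets `J_X` are encoded as natural numbers:
an unbarred entry `j ∈ {1,…,n}` is encoded as `j`, a barred entry `j̄` is
encoded as `2n+1-j` (so that `n̄ = n+1, …, 1̄ = 2n` and the total order of
`J_B = J_C` is the numerical order), and the extra symbol `ovl(n+1)` of
types C and D is encoded as `0`. -/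

/-- The box of type A. -/
def boxA (ι : ℕ → ℕ) (n : ℕ) (s : ℤ) (j : ℕ) : ℕ → ℚ :=
  xsj ι n (s + (PABC ι n j : ℤ)) j - xsj ι n (s + (PABC ι n (j - 1) : ℤ) + 1) (j - 1)

/-- The box of type B. -/
def boxB (ι : ℕ → ℕ) (n : ℕ) (s : ℤ) (e : ℕ) : ℕ → ℚ :=
  if e ≤ n then
    xsj ι n (s + (PABC ι n e : ℤ)) e - xsj ι n (s + (PABC ι n (e - 1) : ℤ) + 1) (e - 1)
  else
    xsj ι n (s + (PABC ι n (2 * n - e) : ℤ) + (n : ℤ) - ((2 * n + 1 - e : ℕ) : ℤ) + 1)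
        (2 * n - e)
      - xsj ι n (s + (PABC ι n (2 * n + 1 - e) : ℤ) + (n : ℤ) - ((2 * n + 1 - e : ℕ) : ℤ) + 1)
          (2 * n + 1 - e)

/-- The box of type C (`ovl(n+1)` encoded as `0`). -/
def boxC (ι : ℕ → ℕ) (n : ℕ) (s : ℤ) (e : ℕ) : ℕ → ℚ :=
  if e = 0 then xsj ι n (s + (PABC ι n n : ℤ)) n
  else if e < n then
    xsj ι n (s + (PABC ι n e : ℤ)) e - xsj ι n (s + (PABC ι n (e - 1) : ℤ) + 1) (e - 1)
  else if e = n then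
    (2 : ℚ) • xsj ι n (s + (PABC ι n n : ℤ)) n
      - xsj ι n (s + (PABC ι n (n - 1) : ℤ) + 1) (n - 1)
  else if e = n + 1 then
    xsj ι n (s + (PABC ι n (n - 1) : ℤ) + 1) (n - 1)
      - (2 : ℚ) • xsj ι n (s + (PABC ι n n : ℤ) + 1) n
  else
    xsj ι n (s + (PABC ι n (2 * n - e) : ℤ) + (n : ℤ) - ((2 * n + 1 - e : ℕ) : ℤ) + 1)
        (2 * n - e)
      - xsj ι n (s + (PABC ι n (2 * n + 1 - e) : ℤ) + (n : ℤ) - ((2 * n + 1 - e : ℕ) : ℤ) + 1)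
          (2 * n + 1 - e)

/-- The box of type D (`ovl(n+1)` encoded as `0`, `n̄` as `n+1`, `ovl(n-1)` as `n+2`). -/
def boxD (ι : ℕ → ℕ) (n : ℕ) (s : ℤ) (e : ℕ) : ℕ → ℚ :=
  if e = 0 then xsj ι n (s + (PD ι n n : ℤ)) n
  else if e ≤ n - 2 then
    xsj ι n (s + (PD ι n e : ℤ)) e - xsj ι n (s + (PD ι n (e - 1) : ℤ) + 1) (e - 1)
  else if e = n - 1 then
    xsj ι n (s + (PD ι n (n - 1) : ℤ)) (n - 1) + xsj ι n (s + (PD ι n n : ℤ)) n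
      - xsj ι n (s + (PD ι n (n - 2) : ℤ) + 1) (n - 2)
  else if e = n then
    xsj ι n (s + (PD ι n n : ℤ)) n - xsj ι n (s + (PD ι n (n - 1) : ℤ) + 1) (n - 1)
  else if e = n + 1 then
    xsj ι n (s + (PD ι n (n - 1) : ℤ)) (n - 1) - xsj ι n (s + (PD ι n n : ℤ) + 1) n
  else if e = n + 2 then
    xsj ι n (s + (PD ι n (n - 2) : ℤ) + 1) (n - 2)
      - xsj ι n (s + (PD ι n (n - 1) : ℤ) + 1) (n - 1)
      - xsj ι n (s + (PD ι n n : ℤ) + 1) n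
  else
    xsj ι n (s + (PD ι n (2 * n - e) : ℤ) + (n : ℤ) - ((2 * n + 1 - e : ℕ) : ℤ)) (2 * n - e)
      - xsj ι n (s + (PD ι n (2 * n + 1 - e) : ℤ) + (n : ℤ) - ((2 * n + 1 - e : ℕ) : ℤ))
          (2 * n + 1 - e)

/-- The column tableau `[j_1,…,j_k]_s = Σ_{i=1}^k box_{s+k-i}(j_i)`. -/
def tab (box : ℤ → ℕ → ℕ → ℚ) (s : ℤ) (k : ℕ) (j : ℕ → ℕ) : ℕ → ℚ :=
  ∑ i ∈ Finset.Icc 1 k, box (s + (k : ℤ) - (i : ℤ)) (j i)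

/-- The set `Tab_{A,ι}`. -/
def TabA (ι : ℕ → ℕ) (n : ℕ) : Set (ℕ → ℚ) :=
  { T | ∃ (k : ℕ) (s : ℤ) (j : ℕ → ℕ),
      1 ≤ k ∧ k ≤ n ∧
      (∀ i, 1 ≤ i → i ≤ k → 1 ≤ j i ∧ j i ≤ n + 1) ∧
      (∀ i, 1 ≤ i → i < k → j i < j (i + 1)) ∧
      1 - (PABC ι n k : ℤ) ≤ s ∧
      T = tab (boxA ι n) s k j }

/-- `|·|` on encoded entries of `J_B = J_C`. -/
def absJ (n e : ℕ) : ℕ := if e ≤ n then e else 2 * n + 1 - e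

/-- The set `Tab_{B,ι}`. -/
def TabB (ι : ℕ → ℕ) (n : ℕ) : Set (ℕ → ℚ) :=
  { T | ∃ (k : ℕ) (s : ℤ) (j : ℕ → ℕ),
      1 ≤ k ∧ k ≤ n ∧
      (∀ i, 1 ≤ i → i ≤ k → 1 ≤ j i ∧ j i ≤ 2 * n) ∧
      (∀ i, 1 ≤ i → i < k → j i < j (i + 1)) ∧
      (k = n → ∀ l m, 1 ≤ l → l < m → m ≤ k → absJ n (j l) ≠ absJ n (j m)) ∧
      1 - (PABC ι n k : ℤ) ≤ s ∧
      T = tab (boxB ι n) s k j }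

/-- Defining conditions of `Tab_{C,ι}` on the data `(k,s,j)`. -/
def TabCcond (ι : ℕ → ℕ) (n : ℕ) (k : ℕ) (s : ℤ) (j : ℕ → ℕ) : Prop :=
  (1 ≤ k ∧ k ≤ n - 1 ∧
    (∀ i, 1 ≤ i → i ≤ k → 1 ≤ j i ∧ j i ≤ 2 * n) ∧
    (∀ i, 1 ≤ i → i < k → j i < j (i + 1)) ∧
    1 - (PABC ι n k : ℤ) ≤ s)
  ∨
  (j 1 = 0 ∧ 1 ≤ k ∧ k ≤ n + 1 ∧
    (∀ i, 2 ≤ i → i ≤ k → n + 1 ≤ j i ∧ j i ≤ 2 * n) ∧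
    (∀ i, 2 ≤ i → i < k → j i < j (i + 1)) ∧
    1 - (PABC ι n n : ℤ) ≤ s)

/-- The set `Tab_{C,ι}`. -/
def TabC (ι : ℕ → ℕ) (n : ℕ) : Set (ℕ → ℚ) :=
  { T | ∃ k s j, TabCcond ι n k s j ∧ T = tab (boxC ι n) s k j }

/-- The partial order on (encoded) `J_D`: `a ≤ b` iff `a = b`, or `a < b` numerically and
`(a,b)` is not the incomparable pair `(n, n̄)`. -/
def leD (n a b : ℕ) : Prop := a = b ∨ (a < b ∧ ¬(a = n ∧ b = n + 1))

/-- Defining conditions of `Tab_{D,ι}` on the data `(k,s,j)`. -/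
def TabDcond (ι : ℕ → ℕ) (n : ℕ) (k : ℕ) (s : ℤ) (j : ℕ → ℕ) : Prop :=
  (1 ≤ k ∧ k ≤ n - 2 ∧
    (∀ i, 1 ≤ i → i ≤ k → 1 ≤ j i ∧ j i ≤ 2 * n) ∧
    (∀ i, 1 ≤ i → i < k → ¬ leD n (j (i + 1)) (j i)) ∧
    1 - (PD ι n k : ℤ) ≤ s)
  ∨
  (j 1 = 0 ∧ 1 ≤ k ∧ k ≤ n + 1 ∧
    (∀ i, 2 ≤ i → i ≤ k → n + 1 ≤ j i ∧ j i ≤ 2 * n) ∧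
    (∀ i, 2 ≤ i → i < k → j i < j (i + 1)) ∧
    (k % 2 = 0 → 1 - (PD ι n (n - 1) : ℤ) ≤ s) ∧
    (k % 2 = 1 → 1 - (PD ι n n : ℤ) ≤ s))

/-- The set `Tab_{D,ι}`. -/
def TabD (ι : ℕ → ℕ) (n : ℕ) : Set (ℕ → ℚ) :=
  { T | ∃ k s j, TabDcond ι n k s j ∧ T = tab (boxD ι n) s k j }

end


section Occ

variable {ι : ℕ → ℕ} {n : ℕ}

theorem occ_succ (hadm : Admissible n ι) {j : ℕ} (h1 : 1 ≤ j) (h2 : j ≤ n) (s : ℕ) :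
    occPos ι j s < occPos ι j (s + 1) ∧ ι (occPos ι j (s + 1)) = j := by
  have hne : {k | occPos ι j s < k ∧ ι k = j}.Nonempty := by
    obtain ⟨k, hk, hk'⟩ := hadm.2.2 j h1 h2 (occPos ι j s + 1)
    exact ⟨k, hk, hk'⟩
  exact Nat.sInf_mem hne

theorem occ_none {j s m : ℕ} (h1 : occPos ι j s < m) (h2 : m < occPos ι j (s + 1)) :
    ι m ≠ j := by
  intro h
  exact Nat.notMem_of_lt_sInf h2 ⟨h1, h⟩

theorem occ_mono (hadm : Admissible n ι) {j : ℕ} (h1 : 1 ≤ j) (h2 : j ≤ n) :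
    StrictMono (occPos ι j) :=
  strictMono_nat_of_lt_succ fun s => (occ_succ hadm h1 h2 s).1

theorem occ_letter (hadm : Admissible n ι) {j : ℕ} (h1 : 1 ≤ j) (h2 : j ≤ n) {s : ℕ}
    (hs : 1 ≤ s) : ι (occPos ι j s) = j := by
  obtain ⟨s, rfl⟩ : ∃ u, s = u + 1 := ⟨s - 1, by omega⟩
  exact (occ_succ hadm h1 h2 s).2

theorem occ_pos (hadm : Admissible n ι) {j : ℕ} (h1 : 1 ≤ j) (h2 : j ≤ n) {s : ℕ}
    (hs : 1 ≤ s) : 0 < occPos ι j s :=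
  occ_mono hadm h1 h2 (show 0 < s by omega)

theorem kplus_occ (hadm : Admissible n ι) {j : ℕ} (h1 : 1 ≤ j) (h2 : j ≤ n) {s : ℕ}
    (hs : 1 ≤ s) : kplus ι (occPos ι j s) = occPos ι j (s + 1) := by
  unfold kplus
  rw [occ_letter hadm h1 h2 hs]
  rfl

theorem kminus_occ (hadm : Admissible n ι) {j : ℕ} (h1 : 1 ≤ j) (h2 : j ≤ n) (s : ℕ) :
    kminus ι (occPos ι j (s + 1)) = occPos ι j s := by
  unfold kminus
  rw [occ_letter hadm h1 h2 (Nat.le_add_left 1 s)]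
  rcases Nat.eq_zero_or_pos s with rfl | hs
  · have : {l | 0 < l ∧ l < occPos ι j (0 + 1) ∧ ι l = j} = ∅ := by
      ext l
      simp only [Set.mem_ofPred_eq, Set.mem_empty_iff_false, iff_false]
      rintro ⟨a, b, c⟩
      exact occ_none (ι := ι) (j := j) (s := 0) a b c
    rw [this]
    simp [occPos]
  · apply IsGreatest.csSup_eq
    refine ⟨⟨occ_pos hadm h1 h2 hs, (occ_succ hadm h1 h2 s).1, occ_letter hadm h1 h2 hs⟩, ?_⟩
    rintro l ⟨a, b, c⟩
    by_contra hcon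
    exact occ_none (not_le.mp hcon) b c

theorem firstOcc_eq (i : ℕ) : firstOcc ι i = occPos ι i 1 := rfl

/-- Alternation property of two letters. -/
def Alt (ι : ℕ → ℕ) (i j : ℕ) : Prop :=
  ∀ k l, 1 ≤ k → k < l → (ι k = i ∨ ι k = j) → (ι l = i ∨ ι l = j) →
      (∀ m, k < m → m < l → ι m ≠ i ∧ ι m ≠ j) → ι k ≠ ι l

theorem Alt.symm {i j : ℕ} (h : Alt ι i j) : Alt ι j i := by
  intro k l h1 h2 h3 h4 h5
  exact h k l h1 h2 h3.symm h4.symm (fun m a b => (h5 m a b).symm)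

theorem alt_step (hadm : Admissible n ι) {i j : ℕ} (hi1 : 1 ≤ i) (hi2 : i ≤ n)
    (hj1 : 1 ≤ j) (hj2 : j ≤ n) (hij : i ≠ j) (h : Alt ι i j) {s t : ℕ} (ht : 1 ≤ t)
    (ha : occPos ι j s < occPos ι i t) (hb : occPos ι i t < occPos ι j (s + 1)) :
    occPos ι j (s + 1) < occPos ι i (t + 1) := by
  by_contra hcon
  have l1 := occ_letter hadm hi1 hi2 ht
  have l2 := occ_letter hadm hi1 hi2 (show 1 ≤ t + 1 by omega)
  have l3 := occ_letter hadm hj1 hj2 (show 1 ≤ s + 1 by omega)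
  have hne : occPos ι j (s + 1) ≠ occPos ι i (t + 1) := by
    intro h'
    rw [h', l2] at l3
    exact hij l3
  refine h (occPos ι i t) (occPos ι i (t + 1)) (occ_pos hadm hi1 hi2 ht)
    (occ_succ hadm hi1 hi2 t).1 (Or.inl l1) (Or.inl l2) ?_ (l1.trans l2.symm)
  intro m hm1 hm2
  exact ⟨occ_none hm1 hm2, occ_none (s := s) (by omega) (by omega)⟩

theorem alt_first (hadm : Admissible n ι) {i j : ℕ} (hi1 : 1 ≤ i) (hi2 : i ≤ n)
    (hj1 : 1 ≤ j) (hj2 : j ≤ n) (hij : i ≠ j) (h : Alt ι i j)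
    (hf : occPos ι i 1 < occPos ι j 1) (t : ℕ) :
    occPos ι j t < occPos ι i (t + 1) ∧ occPos ι i (t + 1) < occPos ι j (t + 1) := by
  induction t with
  | zero => exact ⟨occ_pos hadm hi1 hi2 le_rfl, hf⟩
  | succ t ih =>
    have h1 := alt_step hadm hi1 hi2 hj1 hj2 hij h (by omega) ih.1 ih.2
    exact ⟨h1, alt_step hadm hj1 hj2 hi1 hi2 hij.symm h.symm (by omega) ih.2 h1⟩

theorem pval_add (hadm : Admissible n ι) {i j : ℕ} (hi1 : 1 ≤ i) (hi2 : i ≤ n)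
    (hj1 : 1 ≤ j) (hj2 : j ≤ n) (hij : i ≠ j) : pval ι i j + pval ι j i = 1 := by
  unfold pval
  rw [firstOcc_eq, firstOcc_eq]
  have l1 := occ_letter hadm hi1 hi2 le_rfl
  have l2 := occ_letter hadm hj1 hj2 le_rfl
  have : occPos ι i 1 ≠ occPos ι j 1 := by
    intro h
    rw [h, l2] at l1
    exact hij l1.symm
  split_ifs <;> omega

theorem alt_between (hadm : Admissible n ι) {i j : ℕ} (hi1 : 1 ≤ i) (hi2 : i ≤ n)
    (hj1 : 1 ≤ j) (hj2 : j ≤ n) (hij : i ≠ j) (h : Alt ι i j) {t : ℕ} (ht : 1 ≤ t) :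
    ∃ u, u + 1 = t + pval ι i j ∧ occPos ι i u < occPos ι j t ∧
      occPos ι j t < occPos ι i (u + 1) ∧ occPos ι i (u + 1) < occPos ι j (t + 1) ∧
      occPos ι j (t + 1) < occPos ι i (u + 2) := by
  obtain ⟨t, rfl⟩ : ∃ u, t = u + 1 := ⟨t - 1, by omega⟩
  unfold pval
  rw [firstOcc_eq, firstOcc_eq]
  have l1 := occ_letter hadm hi1 hi2 le_rfl
  have l2 := occ_letter hadm hj1 hj2 le_rfl
  have hne : occPos ι i 1 ≠ occPos ι j 1 := by
    intro h
    rw [h, l2] at l1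
    exact hij l1.symm
  split_ifs with hc
  · have := alt_first hadm hi1 hi2 hj1 hj2 hij h hc
    exact ⟨t + 1, rfl, (this t).2, (this (t + 1)).1, (this (t + 1)).2, (this (t + 2)).1⟩
  · have := alt_first hadm hj1 hj2 hi1 hi2 hij.symm h.symm (by omega)
    exact ⟨t, rfl, (this t).1, (this t).2, (this (t + 1)).1, (this (t + 1)).2⟩

theorem sum_letter (hadm : Admissible n ι) {i j : ℕ} (hi1 : 1 ≤ i) (hi2 : i ≤ n)
    (hj1 : 1 ≤ j) (hj2 : j ≤ n) (hij : i ≠ j) (h : Alt ι i j) {t : ℕ} (ht : 1 ≤ t)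
    (v : ℕ → ℕ → ℚ) :
    (∑ l ∈ Finset.Ioo (occPos ι j t) (occPos ι j (t + 1)), if ι l = i then v l else 0)
      = v (occPos ι i (t + pval ι i j)) := by
  obtain ⟨u, hu, h1, h2, h3, h4⟩ := alt_between hadm hi1 hi2 hj1 hj2 hij h ht
  rw [← hu, Finset.sum_eq_single (occPos ι i (u + 1))]
  · rw [if_pos (occ_letter hadm hi1 hi2 (by omega))]
  · intro b hb hbne
    rw [Finset.mem_Ioo] at hb
    apply if_neg
    rcases lt_or_gt_of_ne hbne with hlt | hgt
    · exact occ_none (s := u) (by omega) hlt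
    · exact occ_none (s := u + 1) hgt (show b < occPos ι i (u + 2) by omega)
  · intro hb
    exact absurd (Finset.mem_Ioo.2 ⟨h2, h3⟩) hb

theorem sum_letter_x (hadm : Admissible n ι) {i j : ℕ}
    (hj1 : 1 ≤ j) (hj2 : j ≤ n) (hij : i ≠ j) (h : 1 ≤ i → i ≤ n → Alt ι i j) {t : ℕ}
    (ht : 1 ≤ t) (c : ℚ) :
    (∑ l ∈ Finset.Ioo (occPos ι j t) (occPos ι j (t + 1)), if ι l = i then c • xc l else 0)
      = c • xsj ι n ((t : ℤ) + pval ι i j) i := by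
  by_cases hi : 1 ≤ i ∧ i ≤ n
  · rw [sum_letter hadm hi.1 hi.2 hj1 hj2 hij (h hi.1 hi.2) ht (fun l => c • xc l)]
    unfold xsj
    rw [if_pos ⟨by omega, hi⟩]
    congr 3
  · unfold xsj
    rw [if_neg (by tauto), smul_zero]
    apply Finset.sum_eq_zero
    intro l hl
    rw [Finset.mem_Ioo] at hl
    apply if_neg
    rintro rfl
    exact hi (hadm.1 l (by omega))

theorem beta_occ (hadm : Admissible n ι) {A : ℕ → ℕ → ℤ} {j : ℕ}
    (hj1 : 1 ≤ j) (hj2 : j ≤ n)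
    (hA : ∀ i, i ≠ j → i ≠ j + 1 → i ≠ j - 1 → A j i = 0)
    (hup : j + 1 ≤ n → Alt ι (j + 1) j) (hdn : 1 ≤ j - 1 → Alt ι (j - 1) j)
    {t : ℕ} (ht : 1 ≤ t) :
    beta A ι (occPos ι j t) = xsj ι n t j + xsj ι n (t + 1) j
      + (A j (j + 1) : ℚ) • xsj ι n ((t : ℤ) + pval ι (j + 1) j) (j + 1)
      + (A j (j - 1) : ℚ) • xsj ι n ((t : ℤ) + pval ι (j - 1) j) (j - 1) := by
  have hp := occ_pos hadm hj1 hj2 ht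
  unfold beta
  rw [if_neg (by omega), kplus_occ hadm hj1 hj2 ht, occ_letter hadm hj1 hj2 ht]
  have hs : (∑ l ∈ Finset.Ioo (occPos ι j t) (occPos ι j (t + 1)), (A j (ι l) : ℚ) • xc l)
      = (A j (j + 1) : ℚ) • xsj ι n ((t : ℤ) + pval ι (j + 1) j) (j + 1)
      + (A j (j - 1) : ℚ) • xsj ι n ((t : ℤ) + pval ι (j - 1) j) (j - 1) := by
    rw [← sum_letter_x hadm hj1 hj2 (by omega) (fun _ => hup) ht,
      ← sum_letter_x hadm hj1 hj2 (by omega) (fun h _ => hdn h) ht, ← Finset.sum_add_distrib]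
    apply Finset.sum_congr rfl
    intro l hl
    rw [Finset.mem_Ioo] at hl
    have hne : ι l ≠ j := occ_none hl.1 hl.2
    by_cases h1 : ι l = j + 1
    · rw [if_pos h1, if_neg (by omega), h1, add_zero]
    · by_cases h2 : ι l = j - 1
      · rw [if_neg h1, if_pos h2, h2, zero_add]
      · rw [if_neg h1, if_neg h2, hA _ hne h1 h2]
        simp
  rw [hs]
  have e1 : xsj ι n t j = xc (occPos ι j t) := by
    unfold xsj
    rw [if_pos ⟨by omega, hj1, hj2⟩]
    rfl
  have e2 : xsj ι n (t + 1) j = xc (occPos ι j (t + 1)) := by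
    unfold xsj
    rw [if_pos ⟨by omega, hj1, hj2⟩]
    rfl
  rw [e1, e2]
  abel

theorem xsj_eval (hadm : Admissible n ι) {i j m : ℕ} (hj1 : 1 ≤ j) (hj2 : j ≤ n)
    (hm : 1 ≤ m) (s : ℤ) :
    xsj ι n s i (occPos ι j m) = if i = j ∧ s = m then 1 else 0 := by
  unfold xsj
  by_cases hc : 1 ≤ s ∧ 1 ≤ i ∧ i ≤ n
  · rw [if_pos hc]
    unfold xc
    have : occPos ι j m = occPos ι i s.toNat ↔ i = j ∧ s = m := by
      constructor
      · intro h
        have l1 := occ_letter hadm hj1 hj2 hm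
        have l2 := occ_letter hadm hc.2.1 hc.2.2 (show 1 ≤ s.toNat by omega)
        rw [h, l2] at l1
        subst l1
        have := (occ_mono hadm hj1 hj2).injective h
        omega
      · rintro ⟨rfl, rfl⟩
        rfl
    simp only [this]
  · rw [if_neg hc, if_neg]
    · rfl
    · rintro ⟨rfl, rfl⟩
      omega

/-- Shifted coordinates. -/
noncomputable def Yc (ι : ℕ → ℕ) (n : ℕ) (t : ℤ) (j : ℕ) : ℕ → ℚ := xsj ι n (t + (PABC ι n j : ℤ)) j

theorem Yc_zero (t : ℤ) : Yc ι n t 0 = 0 := by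
  unfold Yc xsj
  rw [if_neg (by omega)]

theorem Yc_big (t : ℤ) : Yc ι n t (n + 1) = 0 := by
  unfold Yc xsj
  rw [if_neg (by omega)]

theorem PABC_succ {j : ℕ} (hj1 : 1 ≤ j) (hj : j + 1 ≤ n) :
    PABC ι n (j + 1) = PABC ι n j + pval ι (j + 1) j := by
  unfold PABC
  rw [if_pos hj, if_pos (by omega), Finset.sum_Icc_succ_top (by omega)]
  rfl

theorem beta_Y (hadm : Admissible n ι) {A : ℕ → ℕ → ℤ} {j : ℕ}
    (hj1 : 1 ≤ j) (hj2 : j ≤ n)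
    (hA : ∀ i, i ≠ j → i ≠ j + 1 → i ≠ j - 1 → A j i = 0)
    (hup : j + 1 ≤ n → Alt ι (j + 1) j) (hdn : 1 ≤ j - 1 → Alt ι (j - 1) j)
    {m : ℕ} (hm : 1 ≤ m) {t : ℤ} (ht : t + PABC ι n j = m) :
    beta A ι (occPos ι j m) = Yc ι n t j + Yc ι n (t + 1) j
      + (A j (j + 1) : ℚ) • Yc ι n t (j + 1) + (A j (j - 1) : ℚ) • Yc ι n (t + 1) (j - 1) := by
  rw [beta_occ hadm hj1 hj2 hA hup hdn hm]
  have e1 : xsj ι n m j = Yc ι n t j := by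
    unfold Yc
    rw [ht]
  have e2 : xsj ι n (m + 1) j = Yc ι n (t + 1) j := by
    unfold Yc
    congr 1
    omega
  have e3 : xsj ι n ((m : ℤ) + pval ι (j + 1) j) (j + 1) = Yc ι n t (j + 1) := by
    by_cases h : j + 1 ≤ n
    · unfold Yc
      rw [PABC_succ hj1 h]
      congr 1
      push_cast
      omega
    · obtain rfl : j = n := by omega
      rw [Yc_big]
      unfold xsj
      rw [if_neg (by omega)]
  have e4 : xsj ι n ((m : ℤ) + pval ι (j - 1) j) (j - 1) = Yc ι n (t + 1) (j - 1) := by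
    by_cases h : 1 ≤ j - 1
    · unfold Yc
      obtain ⟨i, rfl⟩ : ∃ i, j = i + 1 := ⟨j - 1, by omega⟩
      simp only [Nat.add_sub_cancel] at *
      have := PABC_succ (ι := ι) h hj2
      have := pval_add hadm h (by omega) hj1 hj2 (show i ≠ i + 1 by omega)
      congr 1
      omega
    · obtain h' : j - 1 = 0 := by omega
      rw [h', Yc_zero]
      unfold xsj
      rw [if_neg (by omega)]
  rw [e1, e2, e3, e4]

theorem Yc_eval (hadm : Admissible n ι) {i j m : ℕ} (hj1 : 1 ≤ j) (hj2 : j ≤ n)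
    (hm : 1 ≤ m) {t : ℤ} (ht : t + PABC ι n j = m) (s : ℤ) :
    Yc ι n s i (occPos ι j m) = if i = j ∧ s = t then 1 else 0 := by
  unfold Yc
  rw [xsj_eval hadm hj1 hj2 hm]
  congr 1
  apply propext
  constructor
  · rintro ⟨rfl, h⟩
    exact ⟨rfl, by omega⟩
  · rintro ⟨rfl, h⟩
    exact ⟨rfl, by omega⟩

end Occ

section Comb

/-- Entries in range and strictly increasing on `[a,k]`. -/
def Val (n a k : ℕ) (f : ℕ → ℕ) : Prop :=
  (∀ i, a ≤ i → i ≤ k → 1 ≤ f i ∧ f i ≤ 2 * n) ∧ (∀ i, a ≤ i → i < k → f i < f (i + 1))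

/-- Distinct absolute values on `[1,k]`. -/
def Absd (n k : ℕ) (f : ℕ → ℕ) : Prop :=
  ∀ l m, 1 ≤ l → l < m → m ≤ k → absJ n (f l) ≠ absJ n (f m)

/-- Indicator of a proposition. -/
noncomputable def ind (p : Prop) : ℚ := open Classical in if p then 1 else 0

theorem ind_pos {p : Prop} (h : p) : ind p = 1 := if_pos h

theorem ind_neg {p : Prop} (h : ¬ p) : ind p = 0 := if_neg h

theorem sum_ind (S : Finset ℕ) (q : ℕ → Prop) (hq : ∀ i i', q i → q i' → i = i') :
    ∑ i ∈ S, ind (q i) = ind (∃ i ∈ S, q i) := by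
  by_cases h : ∃ i ∈ S, q i
  · rw [ind_pos h]
    obtain ⟨i, hi, hqi⟩ := h
    rw [Finset.sum_eq_single i]
    · exact ind_pos hqi
    · intro b _ hb
      exact ind_neg fun hqb => hb (hq _ _ hqb hqi)
    · intro h'
      exact absurd hi h'
  · rw [ind_neg h]
    apply Finset.sum_eq_zero
    intro i hi
    exact ind_neg fun hqi => h ⟨i, hi, hqi⟩

theorem Val.gap {n a k : ℕ} {f : ℕ → ℕ} (hV : Val n a k f) {i : ℕ} (hi : a ≤ i) (d : ℕ)
    (hd : i + d ≤ k) : f i + d ≤ f (i + d) := by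
  induction d with
  | zero => simp
  | succ d ih =>
    have h1 := ih (by omega)
    have h2 := hV.2 (i + d) (by omega) (by omega)
    have : i + (d + 1) = i + d + 1 := rfl
    rw [this]
    omega

theorem Val.le {n a k : ℕ} {f : ℕ → ℕ} (hV : Val n a k f) {i i' : ℕ} (hi : a ≤ i)
    (hd : i ≤ i') (hk : i' ≤ k) : f i + (i' - i) ≤ f i' := by
  have := hV.gap hi (i' - i) (by omega)
  rwa [show i + (i' - i) = i' by omega] at this

theorem Val.lt_of {n a k : ℕ} {f : ℕ → ℕ} (hV : Val n a k f) {i i' : ℕ} (hi' : a ≤ i')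
    (hk : i ≤ k) (h : f i < f i') : i < i' := by
  by_contra hc
  have := hV.le hi' (not_lt.mp hc) hk
  omega

theorem Val.up {n a k : ℕ} {f : ℕ → ℕ} (hV : Val n a k f) {i : ℕ}
    (h3 : f i < 2 * n) (h4 : i < k → f (i + 1) ≠ f i + 1) :
    Val n a k (Function.update f i (f i + 1)) := by
  constructor
  · intro x hx1 hx2
    have := hV.1 x hx1 hx2
    rw [Function.update_apply]
    split_ifs <;> omega
  · intro x hx1 hx2
    have := hV.2 x hx1 hx2
    rw [Function.update_apply, Function.update_apply]
    split_ifs with e1 e2 e2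
    · omega
    · subst e1
      have := h4 hx2
      omega
    · subst e2
      omega
    · omega

theorem Val.down {n a k : ℕ} {f : ℕ → ℕ} (hV : Val n a k f) {i : ℕ}
    (h3 : 1 < f i) (h4 : a < i → f (i - 1) + 1 ≠ f i) :
    Val n a k (Function.update f i (f i - 1)) := by
  constructor
  · intro x hx1 hx2
    have := hV.1 x hx1 hx2
    rw [Function.update_apply]
    split_ifs with e
    · subst e
      omega
    · omega
  · intro x hx1 hx2
    have := hV.2 x hx1 hx2
    rw [Function.update_apply, Function.update_apply]
    split_ifs with e1 e2 e2
    · omega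
    · subst e1
      omega
    · subst e2
      have := h4 (by omega)
      simp only [Nat.add_sub_cancel] at this
      omega
    · omega

theorem Absd.ne {n k : ℕ} {f : ℕ → ℕ} (h : Absd n k f) {l m : ℕ} (hl : 1 ≤ l) (hl' : l ≤ k)
    (hm : 1 ≤ m) (hm' : m ≤ k) (hne : l ≠ m) : absJ n (f l) ≠ absJ n (f m) := by
  rcases lt_or_gt_of_ne hne with h' | h'
  · exact h l m hl h' hm'
  · exact (h m l hm h' hl').symm

theorem abs_surj {n : ℕ} {f : ℕ → ℕ} (hV : Val n 1 n f) (h : Absd n n f) {v : ℕ}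
    (hv1 : 1 ≤ v) (hv2 : v ≤ n) : ∃ i, 1 ≤ i ∧ i ≤ n ∧ absJ n (f i) = v := by
  have hinj : Set.InjOn (fun i => absJ n (f i)) (Finset.Icc 1 n : Set ℕ) := by
    intro x hx y hy hxy
    simp only [Finset.coe_Icc, Set.mem_Icc] at hx hy
    by_contra hne
    exact h.ne hx.1 hx.2 hy.1 hy.2 hne hxy
  have hsub : (Finset.Icc 1 n).image (fun i => absJ n (f i)) ⊆ Finset.Icc 1 n := by
    intro x hx
    rw [Finset.mem_image] at hx
    obtain ⟨i, hi, rfl⟩ := hx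
    rw [Finset.mem_Icc] at hi ⊢
    have := hV.1 i hi.1 hi.2
    unfold absJ
    split_ifs <;> omega
  have heq := Finset.eq_of_subset_of_card_le hsub (by rw [Finset.card_image_of_injOn hinj])
  have : v ∈ (Finset.Icc 1 n).image (fun i => absJ n (f i)) := by
    rw [heq, Finset.mem_Icc]
    exact ⟨hv1, hv2⟩
  rw [Finset.mem_image] at this
  obtain ⟨i, hi, hiv⟩ := this
  rw [Finset.mem_Icc] at hi
  exact ⟨i, hi.1, hi.2, hiv⟩

theorem abs_count {n : ℕ} {f : ℕ → ℕ} (h : Absd n n f)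
    (S W : Finset ℕ) (hS : ∀ i ∈ S, 1 ≤ i ∧ i ≤ n) (hW : ∀ i ∈ S, absJ n (f i) ∈ W) :
    S.card ≤ W.card := by
  apply Finset.card_le_card_of_injOn (fun i => absJ n (f i)) hW
  intro x hx y hy hxy
  by_contra hne
  exact h.ne (hS x hx).1 (hS x hx).2 (hS y hy).1 (hS y hy).2 hne hxy

theorem absJ_dist {n : ℕ} {f : ℕ → ℕ} (hV : Val n 1 n f) (h : Absd n n f) {c i i' : ℕ}
    (hc1 : 1 ≤ c) (hc2 : c < n) (hi1 : 1 ≤ i) (hi2 : i ≤ n) (hi1' : 1 ≤ i') (hi2' : i' ≤ n)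
    (hh : (f i = c ∧ f i' + c = 2 * n) ∨ (f i = c + 1 ∧ f i' + c = 2 * n + 1)) :
    i' = i + (n - c) := by
  have hlt : i < i' := hV.lt_of hi1' hi2 (by omega)
  have habs : absJ n (f i) = f i := by
    unfold absJ
    split_ifs <;> omega
  have habs' : absJ n (f i') = 2 * n + 1 - f i' := by
    unfold absJ
    split_ifs <;> omega
  have b1 := abs_count h (Finset.Ioo i i') (Finset.Icc (c + 2) n)
    (by
      intro x hx
      rw [Finset.mem_Ioo] at hx
      omega)
    (by
      intro x hx
      rw [Finset.mem_Ioo] at hx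
      have n1 := h.ne (l := x) (m := i) (by omega) (by omega) hi1 hi2 (by omega)
      have n2 := h.ne (l := x) (m := i') (by omega) (by omega) hi1' hi2' (by omega)
      rw [habs] at n1
      rw [habs'] at n2
      have l1 := hV.le (i := i) (i' := x) (by omega) (by omega) (by omega)
      have l2 := hV.le (i := x) (i' := i') (by omega) (by omega) (by omega)
      rw [Finset.mem_Icc]
      unfold absJ at *
      split_ifs at * <;> omega)
  have b2 := abs_count h (Finset.Icc 1 i ∪ Finset.Icc i' n) (Finset.Icc 1 (c + 1))
    (by
      intro x hx
      rw [Finset.mem_union, Finset.mem_Icc, Finset.mem_Icc] at hx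
      omega)
    (by
      intro x hx
      rw [Finset.mem_union, Finset.mem_Icc, Finset.mem_Icc] at hx
      rw [Finset.mem_Icc]
      have hr := hV.1 x (by omega) (by omega)
      rcases hx with hx | hx
      · have l1 := hV.le (i := x) (i' := i) (by omega) (by omega) (by omega)
        unfold absJ
        split_ifs <;> omega
      · have l1 := hV.le (i := i') (i' := x) (by omega) (by omega) (by omega)
        unfold absJ
        split_ifs <;> omega)
  rw [Finset.card_union_of_disjoint (by
    rw [Finset.disjoint_left]
    intro x hx hx'
    rw [Finset.mem_Icc] at hx hx'
    omega)] at b2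
  simp only [Nat.card_Icc, Nat.card_Ioo] at b1 b2
  omega

theorem absd_swap {n : ℕ} {f g : ℕ → ℕ} (h : Absd n n f) {i i' : ℕ}
    (hi1 : 1 ≤ i) (hi2 : i ≤ n) (hi1' : 1 ≤ i') (hi2' : i' ≤ n)
    (hii : i ≠ i')
    (ho : ∀ x, x ≠ i → x ≠ i' → g x = f x)
    (hb : absJ n (g i) = absJ n (f i')) (hb' : absJ n (g i') = absJ n (f i)) :
    Absd n n g := by
  intro l m hl hlm hm
  have hb0 := h.ne hi1 hi2 hi1' hi2' hii
  by_cases e1 : l = i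
  · by_cases e2 : m = i'
    · rw [e1, e2, hb, hb']
      exact hb0.symm
    · rw [ho m (by omega) e2, e1, hb]
      exact h.ne hi1' hi2' (by omega) hm (Ne.symm e2)
  · by_cases e3 : l = i'
    · by_cases e2 : m = i
      · rw [e3, e2, hb, hb']
        exact hb0
      · rw [ho m e2 (by omega), e3, hb']
        exact h.ne hi1 hi2 (by omega) hm (Ne.symm e2)
    · rw [ho l e1 e3]
      by_cases e2 : m = i
      · rw [e2, hb]
        exact h.ne hl (by omega) hi1' hi2' e3
      · by_cases e4 : m = i'
        · rw [e4, hb']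
          exact h.ne hl (by omega) hi1 hi2 e1
        · rw [ho m e2 e4]
          exact h l m hl hlm hm

/-- Partial tableau sums. -/
def tabF (box : ℤ → ℕ → ℕ → ℚ) (s : ℤ) (k a : ℕ) (f : ℕ → ℕ) : ℕ → ℚ :=
  ∑ i ∈ Finset.Icc a k, box (s + (k : ℤ) - (i : ℤ)) (f i)

theorem tabF_update (box : ℤ → ℕ → ℕ → ℚ) (s : ℤ) {k a : ℕ} (f : ℕ → ℕ) {i e : ℕ}
    (h1 : a ≤ i) (h2 : i ≤ k) :
    tabF box s k a (Function.update f i e)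
      = tabF box s k a f + (box (s + k - i) e - box (s + k - i) (f i)) := by
  unfold tabF
  have hm : i ∈ Finset.Icc a k := Finset.mem_Icc.2 ⟨h1, h2⟩
  rw [← Finset.add_sum_erase _ _ hm, ← Finset.add_sum_erase _ (fun x : ℕ => box (s + k - x) (f x)) hm,
    Function.update_self]
  rw [Finset.sum_congr rfl (g := fun x : ℕ => box (s + k - x) (f x))]
  · abel
  · intro x hx
    rw [Function.update_of_ne (Finset.ne_of_mem_erase hx)]

/-- Indicators of the four patterns relevant for the coefficient. -/
noncomputable def coefI (n c : ℕ) (t r : ℤ) (e : ℕ) : ℚ :=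
  ind (e = c ∧ r = t) - ind (e = c + 1 ∧ r + 1 = t)
    + ind (c < n ∧ e + c = 2 * n ∧ r + n - c = t)
    - ind (c < n ∧ e + c = 2 * n + 1 ∧ r + n - c + 1 = t)

theorem tabF_eval {n c : ℕ} {t : ℤ} {w : ℚ} {p : ℕ} {box : ℤ → ℕ → ℕ → ℚ}
    (hev : ∀ r e, 1 ≤ e → e ≤ 2 * n → box r e p = w * coefI n c t r e)
    {s : ℤ} {k a : ℕ} {f : ℕ → ℕ} (hV : Val n a k f) :
    tabF box s k a f p = w *
      (ind (∃ i ∈ Finset.Icc a k, f i = c ∧ s + k - i = t)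
        - ind (∃ i ∈ Finset.Icc a k, f i = c + 1 ∧ s + k - i + 1 = t)
        + ind (∃ i ∈ Finset.Icc a k, c < n ∧ f i + c = 2 * n ∧ s + k - i + n - c = t)
        - ind (∃ i ∈ Finset.Icc a k, c < n ∧ f i + c = 2 * n + 1 ∧
            s + k - i + n - c + 1 = t)) := by
  unfold tabF
  rw [Finset.sum_apply, Finset.sum_congr rfl
    (g := fun (i : ℕ) => w * coefI n c t (s + k - i) (f i))]
  · rw [← Finset.mul_sum]
    unfold coefI
    rw [Finset.sum_sub_distrib, Finset.sum_add_distrib, Finset.sum_sub_distrib,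
      sum_ind, sum_ind, sum_ind, sum_ind]
    all_goals
      intro i i' h h'
      omega
  · intro i hi
    rw [Finset.mem_Icc] at hi
    exact hev _ _ (hV.1 i hi.1 hi.2).1 (hV.1 i hi.1 hi.2).2

end Comb

section Core

theorem trich_pos {A B C D : Prop} {w x : ℚ} (hw : 0 < w)
    (hx : x = w * (ind A - ind B + ind C - ind D)) (h : 0 < x) :
    (A ∧ ¬ B ∧ C ∧ ¬ D ∧ x = w + w) ∨ (A ∧ ¬ B ∧ (C ↔ D) ∧ x = w)
      ∨ ((A ↔ B) ∧ C ∧ ¬ D ∧ x = w) := by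
  by_cases hA : A <;> by_cases hB : B <;> by_cases hC : C <;> by_cases hD : D <;>
    simp [ind, hA, hB, hC, hD] at hx ⊢ <;> linarith

theorem trich_neg {A B C D : Prop} {w x : ℚ} (hw : 0 < w)
    (hx : x = w * (ind A - ind B + ind C - ind D)) (h : x < 0) :
    (¬ A ∧ B ∧ ¬ C ∧ D ∧ x = -(w + w)) ∨ (¬ A ∧ B ∧ (C ↔ D) ∧ x = -w)
      ∨ ((A ↔ B) ∧ ¬ C ∧ D ∧ x = -w) := by
  by_cases hA : A <;> by_cases hB : B <;> by_cases hC : C <;> by_cases hD : D <;>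
    simp [ind, hA, hB, hC, hD] at hx ⊢ <;> linarith

theorem core_up {n c : ℕ} (hc1 : 1 ≤ c) (hc2 : c ≤ n) {t : ℤ} {w : ℚ} (hw : 0 < w) {p : ℕ}
    {box : ℤ → ℕ → ℕ → ℚ} {β : ℕ → ℚ}
    (hev : ∀ r e, 1 ≤ e → e ≤ 2 * n → box r e p = w * coefI n c t r e)
    (hb1 : box t (c + 1) - box t c = - (w • β))
    (hb2 : c < n → box (t - n + c) (2 * n - c + 1) - box (t - n + c) (2 * n - c) = - (w • β))
    {s : ℤ} {k a : ℕ} {f : ℕ → ℕ} (hV : Val n a k f) (hpos : 0 < tabF box s k a f p) :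
    ∃ g : ℕ → ℕ, Val n a k g ∧ (∀ i, i < a → g i = f i) ∧
      (c < n → ∀ i, n + 1 ≤ f i → n + 1 ≤ g i) ∧
      (k = n → a = 1 → Absd n k f → Absd n k g) ∧
      tabF box s k a g = tabF box s k a f - (tabF box s k a f p) • β := by
  rcases trich_pos hw (tabF_eval (s := s) hev hV) hpos with
    ⟨hA, hB, hC, hD, hx⟩ | ⟨hA, hB, hCD, hx⟩ | ⟨hAB, hC, hD, hx⟩
  · obtain ⟨i, hi, hfi, hti⟩ := hA
    obtain ⟨i', hi', hcn, hfi', hti'⟩ := hC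
    rw [Finset.mem_Icc] at hi hi'
    have hlt : i < i' := hV.lt_of hi'.1 hi.2 (by omega)
    have hV1 : Val n a k (Function.update f i (f i + 1)) := by
      refine hV.up (by omega) fun h h' => hB ⟨i + 1, Finset.mem_Icc.2 (by omega), by omega, ?_⟩
      push_cast
      omega
    have hu : Function.update f i (f i + 1) i' = f i' := Function.update_of_ne (by omega) _ _
    have hV2 := hV1.up (i := i') (by rw [hu]; omega) (by
      intro h h'
      rw [hu, Function.update_of_ne (by omega)] at h'
      refine hD ⟨i' + 1, Finset.mem_Icc.2 (by omega), hcn, by omega, ?_⟩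
      push_cast
      omega)
    have hgi : Function.update (Function.update f i (f i + 1)) i'
        (Function.update f i (f i + 1) i' + 1) i = f i + 1 := by
      rw [Function.update_of_ne (by omega), Function.update_self]
    have hgi' : Function.update (Function.update f i (f i + 1)) i'
        (Function.update f i (f i + 1) i' + 1) i' = f i' + 1 := by
      rw [Function.update_self, hu]
    have ho : ∀ x, x ≠ i → x ≠ i' → Function.update (Function.update f i (f i + 1)) i'
        (Function.update f i (f i + 1) i' + 1) x = f x := by
      intro x h1 h2
      rw [Function.update_of_ne h2, Function.update_of_ne h1]
    refine ⟨_, hV2, ?_, ?_, ?_, ?_⟩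
    · intro x hx
      exact ho x (by omega) (by omega)
    · intro _ x hx
      by_cases h1 : x = i
      · subst h1
        omega
      · by_cases h2 : x = i'
        · subst h2
          omega
        · rw [ho x h1 h2]
          exact hx
    · intro hk ha hab
      subst ha
      subst hk
      refine absd_swap hab hi.1 hi.2 hi'.1 hi'.2 (by omega) ho ?_ ?_
      · rw [hgi]
        unfold absJ
        split_ifs <;> omega
      · rw [hgi']
        unfold absJ
        split_ifs <;> omega
    · rw [tabF_update _ _ _ hi'.1 hi'.2, tabF_update _ _ _ hi.1 hi.2, hu, hx, hfi,
        show f i' = 2 * n - c by omega, hti, hb1,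
        show s + (k : ℤ) - i' = t - n + c by omega, hb2 hcn]
      module
  · obtain ⟨i, hi, hfi, hti⟩ := hA
    rw [Finset.mem_Icc] at hi
    have hB' : i < k → f (i + 1) ≠ f i + 1 := by
      refine fun h h' => hB ⟨i + 1, Finset.mem_Icc.2 (by omega), by omega, ?_⟩
      push_cast
      omega
    refine ⟨_, hV.up (i := i) (by omega) hB', ?_, ?_, ?_, ?_⟩
    · intro x hx
      rw [Function.update_of_ne (by omega)]
    · intro _ x hx
      rw [Function.update_apply]
      split_ifs with h1
      · subst h1
        omega
      · exact hx
    · intro hk ha hab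
      subst ha
      subst hk
      by_cases hcn : c < k
      · exfalso
        obtain ⟨i', h1, h2, h3⟩ := abs_surj hV hab (v := c + 1) (by omega) (by omega)
        have h4 : f i' + c = 2 * k := by
          have := hV.1 i' h1 h2
          by_contra hcon
          have h5 : f i' = c + 1 := by
            unfold absJ at h3
            split_ifs at h3 <;> omega
          have h6 : i < i' := hV.lt_of h1 hi.2 (by omega)
          have h7 := hV.le (i := i) (i' := i') hi.1 (by omega) h2
          obtain rfl : i' = i + 1 := by omega
          exact hB' (by omega) (by omega)
        have h5 := absJ_dist hV hab hc1 hcn hi.1 hi.2 h1 h2 (Or.inl ⟨hfi, h4⟩)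
        obtain ⟨i'', h6, _, h7, _⟩ := hCD.1 ⟨i', Finset.mem_Icc.2 ⟨h1, h2⟩, hcn, h4, by omega⟩
        rw [Finset.mem_Icc] at h6
        refine hab.ne hi.1 hi.2 h6.1 h6.2 ?_ ?_
        · rintro rfl
          omega
        · unfold absJ
          split_ifs <;> omega
      · intro l m hl hlm hm
        have := hab l m hl hlm hm
        have he : ∀ x, absJ k (Function.update f i (f i + 1) x) = absJ k (f x) := by
          intro x
          rw [Function.update_apply]
          split_ifs with h1
          · subst h1
            unfold absJ
            split_ifs <;> omega
          · rfl
        rw [he, he]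
        exact this
    · rw [tabF_update _ _ _ hi.1 hi.2, hx, hfi, hti, hb1]
      module
  · obtain ⟨i, hi, hcn, hfi, hti⟩ := hC
    rw [Finset.mem_Icc] at hi
    have hB' : i < k → f (i + 1) ≠ f i + 1 := by
      refine fun h h' => hD ⟨i + 1, Finset.mem_Icc.2 (by omega), hcn, by omega, ?_⟩
      push_cast
      omega
    refine ⟨_, hV.up (i := i) (by omega) hB', ?_, ?_, ?_, ?_⟩
    · intro x hx
      rw [Function.update_of_ne (by omega)]
    · intro _ x hx
      rw [Function.update_apply]
      split_ifs with h1
      · omega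
      · exact hx
    · intro hk ha hab
      subst ha
      subst hk
      exfalso
      obtain ⟨i', h1, h2, h3⟩ := abs_surj hV hab (v := c) (by omega) (by omega)
      have h4 : f i' = c := by
        have := hV.1 i' h1 h2
        by_contra hcon
        have h5 : f i' = f i + 1 := by
          unfold absJ at h3
          split_ifs at h3 <;> omega
        have h6 : i < i' := hV.lt_of h1 hi.2 (by omega)
        have h7 := hV.le (i := i) (i' := i') hi.1 (by omega) h2
        obtain rfl : i' = i + 1 := by omega
        exact hB' (by omega) (by omega)
      have h5 := absJ_dist hV hab hc1 hcn h1 h2 hi.1 hi.2 (Or.inl ⟨h4, hfi⟩)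
      obtain ⟨i'', h6, h7, _⟩ := hAB.1 ⟨i', Finset.mem_Icc.2 ⟨h1, h2⟩, h4, by omega⟩
      rw [Finset.mem_Icc] at h6
      refine hab.ne hi.1 hi.2 h6.1 h6.2 ?_ ?_
      · rintro rfl
        omega
      · unfold absJ
        split_ifs <;> omega
    · rw [tabF_update _ _ _ hi.1 hi.2, hx, show f i = 2 * n - c by omega,
        show s + (k : ℤ) - i = t - n + c by omega, hb2 hcn]
      module

theorem core_down {n c : ℕ} (hc1 : 1 ≤ c) (hc2 : c ≤ n) {t : ℤ} {w : ℚ} (hw : 0 < w) {p : ℕ}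
    {box : ℤ → ℕ → ℕ → ℚ} {β : ℕ → ℚ}
    (hev : ∀ r e, 1 ≤ e → e ≤ 2 * n → box r e p = w * coefI n c t r e)
    (hb1 : box (t - 1) (c + 1) - box (t - 1) c = - (w • β))
    (hb2 : c < n → box (t - 1 - n + c) (2 * n - c + 1) - box (t - 1 - n + c) (2 * n - c)
      = - (w • β))
    {s : ℤ} {k a : ℕ} {f : ℕ → ℕ} (hV : Val n a k f) (hneg : tabF box s k a f p < 0) :
    ∃ g : ℕ → ℕ, Val n a k g ∧ (∀ i, i < a → g i = f i) ∧
      (c < n → ∀ i, n + 1 ≤ f i → n + 1 ≤ g i) ∧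
      (k = n → a = 1 → Absd n k f → Absd n k g) ∧
      tabF box s k a g = tabF box s k a f - (tabF box s k a f p) • β := by
  have hb1' : box (t - 1) c - box (t - 1) (c + 1) = w • β := by
    rw [← neg_sub, hb1, neg_neg]
  have hb2' : c < n → box (t - 1 - n + c) (2 * n - c) - box (t - 1 - n + c) (2 * n - c + 1)
      = w • β := by
    intro h
    rw [← neg_sub, hb2 h, neg_neg]
  rcases trich_neg hw (tabF_eval (s := s) hev hV) hneg with
    ⟨hB, hA, hD, hC, hx⟩ | ⟨hB, hA, hCD, hx⟩ | ⟨hAB, hD, hC, hx⟩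
  · obtain ⟨i, hi, hfi, hti⟩ := hA
    obtain ⟨i', hi', hcn, hfi', hti'⟩ := hC
    rw [Finset.mem_Icc] at hi hi'
    have hlt : i < i' := hV.lt_of hi'.1 hi.2 (by omega)
    have hV1 : Val n a k (Function.update f i (f i - 1)) := by
      refine hV.down (by omega) fun h h' =>
        hB ⟨i - 1, Finset.mem_Icc.2 (by omega), by omega, ?_⟩
      omega
    have hu : Function.update f i (f i - 1) i' = f i' := Function.update_of_ne (by omega) _ _
    have hV2 := hV1.down (i := i') (by rw [hu]; omega) (by
      intro h h'
      rw [hu, Function.update_apply] at h'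
      split_ifs at h' with h1
      · omega
      · refine hD ⟨i' - 1, Finset.mem_Icc.2 (by omega), hcn, by omega, ?_⟩
        omega)
    have hgi : Function.update (Function.update f i (f i - 1)) i'
        (Function.update f i (f i - 1) i' - 1) i = f i - 1 := by
      rw [Function.update_of_ne (by omega), Function.update_self]
    have hgi' : Function.update (Function.update f i (f i - 1)) i'
        (Function.update f i (f i - 1) i' - 1) i' = f i' - 1 := by
      rw [Function.update_self, hu]
    have ho : ∀ x, x ≠ i → x ≠ i' → Function.update (Function.update f i (f i - 1)) i'
        (Function.update f i (f i - 1) i' - 1) x = f x := by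
      intro x h1 h2
      rw [Function.update_of_ne h2, Function.update_of_ne h1]
    refine ⟨_, hV2, ?_, ?_, ?_, ?_⟩
    · intro x hx
      exact ho x (by omega) (by omega)
    · intro _ x hx
      by_cases h1 : x = i
      · subst h1
        omega
      · by_cases h2 : x = i'
        · subst h2
          omega
        · rw [ho x h1 h2]
          exact hx
    · intro hk ha hab
      subst ha
      subst hk
      refine absd_swap hab hi.1 hi.2 hi'.1 hi'.2 (by omega) ho ?_ ?_
      · rw [hgi]
        unfold absJ
        split_ifs <;> omega
      · rw [hgi']
        unfold absJ
        split_ifs <;> omega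
    · rw [tabF_update _ _ _ hi'.1 hi'.2, tabF_update _ _ _ hi.1 hi.2, hu, hx, hfi,
        show f i' = 2 * n - c + 1 by omega, show s + (k : ℤ) - i = t - 1 by omega,
        Nat.add_sub_cancel, Nat.add_sub_cancel, hb1',
        show s + (k : ℤ) - i' = t - 1 - n + c by omega, hb2' hcn]
      module
  · obtain ⟨i, hi, hfi, hti⟩ := hA
    rw [Finset.mem_Icc] at hi
    have hB' : a < i → f (i - 1) + 1 ≠ f i := by
      refine fun h h' => hB ⟨i - 1, Finset.mem_Icc.2 (by omega), by omega, ?_⟩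
      omega
    refine ⟨_, hV.down (i := i) (by omega) hB', ?_, ?_, ?_, ?_⟩
    · intro x hx
      rw [Function.update_of_ne (by omega)]
    · intro _ x hx
      rw [Function.update_apply]
      split_ifs with h1
      · subst h1
        omega
      · exact hx
    · intro hk ha hab
      subst ha
      subst hk
      by_cases hcn : c < k
      · exfalso
        obtain ⟨i', h1, h2, h3⟩ := abs_surj hV hab (v := c) (by omega) (by omega)
        have h4 : f i' + c = 2 * k + 1 := by
          have := hV.1 i' h1 h2
          by_contra hcon
          have h5 : f i' = c := by
            unfold absJ at h3
            split_ifs at h3 <;> omega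
          have h6 : i' < i := hV.lt_of hi.1 h2 (by omega)
          have h7 := hV.le (i := i') (i' := i) h1 (by omega) hi.2
          obtain rfl : i' = i - 1 := by omega
          exact hB' (by omega) (by omega)
        have h5 := absJ_dist hV hab hc1 hcn hi.1 hi.2 h1 h2 (Or.inr ⟨hfi, h4⟩)
        obtain ⟨i'', h6, _, h7, _⟩ := hCD.2 ⟨i', Finset.mem_Icc.2 ⟨h1, h2⟩, hcn, h4, by omega⟩
        rw [Finset.mem_Icc] at h6
        refine hab.ne hi.1 hi.2 h6.1 h6.2 ?_ ?_
        · rintro rfl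
          omega
        · unfold absJ
          split_ifs <;> omega
      · intro l m hl hlm hm
        have := hab l m hl hlm hm
        have he : ∀ x, absJ k (Function.update f i (f i - 1) x) = absJ k (f x) := by
          intro x
          rw [Function.update_apply]
          split_ifs with h1
          · subst h1
            unfold absJ
            split_ifs <;> omega
          · rfl
        rw [he, he]
        exact this
    · rw [tabF_update _ _ _ hi.1 hi.2, hx, hfi, show s + (k : ℤ) - i = t - 1 by omega,
        Nat.add_sub_cancel, hb1']
      module
  · obtain ⟨i, hi, hcn, hfi, hti⟩ := hC
    rw [Finset.mem_Icc] at hi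
    have hB' : a < i → f (i - 1) + 1 ≠ f i := by
      refine fun h h' => hD ⟨i - 1, Finset.mem_Icc.2 (by omega), hcn, by omega, ?_⟩
      omega
    refine ⟨_, hV.down (i := i) (by omega) hB', ?_, ?_, ?_, ?_⟩
    · intro x hx
      rw [Function.update_of_ne (by omega)]
    · intro _ x hx
      rw [Function.update_apply]
      split_ifs with h1
      · omega
      · exact hx
    · intro hk ha hab
      subst ha
      subst hk
      exfalso
      obtain ⟨i', h1, h2, h3⟩ := abs_surj hV hab (v := c + 1) (by omega) (by omega)
      have h4 : f i' = c + 1 := by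
        have := hV.1 i' h1 h2
        by_contra hcon
        have h5 : f i' + 1 = f i := by
          unfold absJ at h3
          split_ifs at h3 <;> omega
        have h6 : i' < i := hV.lt_of hi.1 h2 (by omega)
        have h7 := hV.le (i := i') (i' := i) h1 (by omega) hi.2
        obtain rfl : i' = i - 1 := by omega
        exact hB' (by omega) (by omega)
      have h5 := absJ_dist hV hab hc1 hcn h1 h2 hi.1 hi.2 (Or.inr ⟨h4, hfi⟩)
      obtain ⟨i'', h6, h7, _⟩ := hAB.2 ⟨i', Finset.mem_Icc.2 ⟨h1, h2⟩, h4, by omega⟩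
      rw [Finset.mem_Icc] at h6
      refine hab.ne hi.1 hi.2 h6.1 h6.2 ?_ ?_
      · rintro rfl
        omega
      · unfold absJ
        split_ifs <;> omega
    · rw [tabF_update _ _ _ hi.1 hi.2, hx, show f i = 2 * n - c + 1 by omega,
        show s + (k : ℤ) - i = t - 1 - n + c by omega, Nat.add_sub_cancel, hb2' hcn]
      module

end Core

section Boxes

variable {ι : ℕ → ℕ} {n : ℕ}

/-- Weighted shifted coordinates. -/
noncomputable def Zc (ι : ℕ → ℕ) (n : ℕ) (d : ℚ) (t : ℤ) (j : ℕ) : ℕ → ℚ :=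
  (if j = n then d else 1) • Yc ι n t j

/-- Uniform description of the boxes of types B and C. -/
noncomputable def gbox (ι : ℕ → ℕ) (n : ℕ) (d : ℚ) (r : ℤ) (e : ℕ) : ℕ → ℚ :=
  if e ≤ n then Zc ι n d r e - Zc ι n d (r + 1) (e - 1)
  else Zc ι n d (r + e - n) (2 * n - e) - Zc ι n d (r + e - n) (2 * n + 1 - e)

theorem boxB_eq (r : ℤ) {e : ℕ} (he : e ≤ 2 * n) : boxB ι n r e = gbox ι n 1 r e := by
  unfold boxB gbox Zc Yc
  simp only [ite_self, one_smul]
  split_ifs with h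
  · congr 2
    ring
  · congr 2 <;> · push_cast [show e ≤ 2 * n + 1 by omega]; ring

theorem boxC_eq (hn : 2 ≤ n) (r : ℤ) {e : ℕ} (he1 : 1 ≤ e) (he : e ≤ 2 * n) :
    boxC ι n r e = gbox ι n 2 r e := by
  unfold boxC gbox Zc Yc
  rw [if_neg (show ¬ e = 0 by omega)]
  by_cases h1 : e < n
  · rw [if_pos h1, if_pos (show e ≤ n by omega), if_neg (show ¬ e = n by omega),
      if_neg (show ¬ e - 1 = n by omega), one_smul, one_smul]
    congr 2
    ring
  · rw [if_neg h1]
    by_cases h2 : e = n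
    · subst h2
      rw [if_pos rfl, if_pos le_rfl, if_pos rfl, if_neg (show ¬ e - 1 = e by omega), one_smul]
      congr 2
      ring
    · rw [if_neg h2, if_neg (show ¬ e ≤ n by omega)]
      by_cases h3 : e = n + 1
      · subst h3
        rw [if_pos rfl, show 2 * n - (n + 1) = n - 1 by omega,
          show 2 * n + 1 - (n + 1) = n by omega, if_neg (show ¬ n - 1 = n by omega), if_pos rfl,
          one_smul]
        congr 2
        · push_cast
          ring
        · congr 1
          push_cast
          ring
      · rw [if_neg h3, if_neg (show ¬ 2 * n - e = n by omega),
          if_neg (show ¬ 2 * n + 1 - e = n by omega), one_smul, one_smul]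
        congr 2 <;> · push_cast [show e ≤ 2 * n + 1 by omega]; ring

theorem Zc_eval (hadm : Admissible n ι) {i c m : ℕ} (hc1 : 1 ≤ c) (hc2 : c ≤ n)
    (hm : 1 ≤ m) {t : ℤ} (ht : t + PABC ι n c = m) (d : ℚ) (s : ℤ) :
    Zc ι n d s i (occPos ι c m) = (if c = n then d else 1) * ind (i = c ∧ s = t) := by
  unfold Zc ind
  rw [Pi.smul_apply, Yc_eval hadm hc1 hc2 hm ht, smul_eq_mul]
  by_cases h : i = c ∧ s = t
  · rw [if_pos h, if_pos h, h.1]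
  · rw [if_neg h, if_neg h]
    simp

theorem ind_congr {p q : Prop} (h : p ↔ q) : ind p = ind q := by
  rw [propext h]

theorem gbox_eval (hadm : Admissible n ι) {c m : ℕ} (hc1 : 1 ≤ c) (hc2 : c ≤ n)
    (hm : 1 ≤ m) {t : ℤ} (ht : t + PABC ι n c = m) (d : ℚ) (r : ℤ) {e : ℕ}
    (he1 : 1 ≤ e) (he2 : e ≤ 2 * n) :
    gbox ι n d r e (occPos ι c m) = (if c = n then d else 1) * coefI n c t r e := by
  unfold gbox coefI
  by_cases h : e ≤ n
  · rw [if_pos h, Pi.sub_apply, Zc_eval hadm hc1 hc2 hm ht, Zc_eval hadm hc1 hc2 hm ht,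
      ind_neg (p := c < n ∧ e + c = 2 * n ∧ _) (by omega),
      ind_neg (p := c < n ∧ e + c = 2 * n + 1 ∧ _) (by omega),
      ind_congr (p := e - 1 = c ∧ r + 1 = t) (q := e = c + 1 ∧ r + 1 = t) (by omega)]
    ring
  · rw [if_neg h, Pi.sub_apply, Zc_eval hadm hc1 hc2 hm ht, Zc_eval hadm hc1 hc2 hm ht,
      ind_neg (p := e = c ∧ _) (by omega),
      ind_congr (p := 2 * n - e = c ∧ r + e - n = t)
        (q := c < n ∧ e + c = 2 * n ∧ r + n - c = t) (by omega)]
    by_cases hcn : c < n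
    · rw [ind_neg (p := e = c + 1 ∧ _) (by omega),
        ind_congr (p := 2 * n + 1 - e = c ∧ r + e - n = t)
          (q := c < n ∧ e + c = 2 * n + 1 ∧ r + n - c + 1 = t) (by omega)]
      ring
    · rw [ind_neg (p := c < n ∧ e + c = 2 * n + 1 ∧ _) (by omega),
        ind_congr (p := 2 * n + 1 - e = c ∧ r + e - n = t)
          (q := e = c + 1 ∧ r + 1 = t) (by omega)]
      ring

/-- The properties of the Cartan matrix needed for the argument. -/
structure CartOK (n : ℕ) (d : ℚ) (A : ℕ → ℕ → ℤ) : Prop where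
  up : ∀ c, 1 ≤ c → c < n → (A c (c + 1) : ℚ) = - (if c + 1 = n then d else 1)
  dn : ∀ c, 1 ≤ c → c < n → (A c (c - 1) : ℚ) = -1
  last : d * (A n (n - 1) : ℚ) = -2
  zero : ∀ c i, i ≠ c → i ≠ c + 1 → i ≠ c - 1 → A c i = 0

/-- `β` in shifted coordinates. -/
noncomputable def bY (A : ℕ → ℕ → ℤ) (ι : ℕ → ℕ) (n : ℕ) (c : ℕ) (t : ℤ) : ℕ → ℚ :=
  Yc ι n t c + Yc ι n (t + 1) c
      + (A c (c + 1) : ℚ) • Yc ι n t (c + 1) + (A c (c - 1) : ℚ) • Yc ι n (t + 1) (c - 1)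

theorem gbox_diff1 {d : ℚ} {A : ℕ → ℕ → ℤ} (hA : CartOK n d A) {c : ℕ}
    (hc1 : 1 ≤ c) (hc2 : c ≤ n) (t : ℤ) :
    gbox ι n d t (c + 1) - gbox ι n d t c = - ((if c = n then d else 1 : ℚ) • bY A ι n c t) := by
  unfold gbox bY Zc
  by_cases hcn : c < n
  · rw [if_pos (show c + 1 ≤ n by omega), if_pos (show c ≤ n by omega), hA.up c hc1 hcn, hA.dn c hc1 hcn,
      Nat.add_sub_cancel, if_neg (show ¬ c = n by omega), if_neg (show ¬ c - 1 = n by omega)]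
    module
  · obtain rfl : c = n := by omega
    have h2 : (2 : ℚ) = - (d * (A c (c - 1) : ℚ)) := by rw [hA.last]; ring
    rw [if_neg (show ¬ c + 1 ≤ c by omega), if_pos le_rfl, Yc_big, show 2 * c - (c + 1) = c - 1 by omega,
      show 2 * c + 1 - (c + 1) = c by omega, if_pos rfl, if_neg (show ¬ c - 1 = c by omega),
      show t + ((c + 1 : ℕ) : ℤ) - c = t + 1 by push_cast; ring]
    have h3 : (d * (A c (c - 1) : ℚ)) • Yc ι c (t + 1) (c - 1)
        = (-2 : ℚ) • Yc ι c (t + 1) (c - 1) := by rw [hA.last]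
    simp only [smul_add, smul_zero, smul_smul]
    rw [h3]
    module

theorem gbox_diff2 {d : ℚ} {A : ℕ → ℕ → ℤ} (hA : CartOK n d A) {c : ℕ}
    (hc1 : 1 ≤ c) (hcn : c < n) (t : ℤ) :
    gbox ι n d (t - n + c) (2 * n - c + 1) - gbox ι n d (t - n + c) (2 * n - c)
      = - ((if c = n then d else 1 : ℚ) • bY A ι n c t) := by
  unfold gbox bY Zc
  rw [if_neg (show ¬ 2 * n - c + 1 ≤ n by omega), if_neg (show ¬ 2 * n - c ≤ n by omega),
    hA.up c hc1 hcn, hA.dn c hc1 hcn,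
    show 2 * n - (2 * n - c + 1) = c - 1 by omega,
    show 2 * n + 1 - (2 * n - c + 1) = c by omega,
    show 2 * n - (2 * n - c) = c by omega,
    show 2 * n + 1 - (2 * n - c) = c + 1 by omega,
    show t - n + c + ((2 * n - c + 1 : ℕ) : ℤ) - n = t + 1 by omega,
    show t - n + c + ((2 * n - c : ℕ) : ℤ) - n = t by omega,
    if_neg (show ¬ c = n by omega), if_neg (show ¬ c - 1 = n by omega)]
  module

/-- Alternation of all neighbouring letters. -/
def AltAll (n : ℕ) (ι : ℕ → ℕ) : Prop := ∀ c, 1 ≤ c → c + 1 ≤ n → Alt ι (c + 1) c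

theorem beta_bY (hadm : Admissible n ι) {d : ℚ} {A : ℕ → ℕ → ℤ} (hA : CartOK n d A)
    (halt : AltAll n ι) {c m : ℕ} (hc1 : 1 ≤ c) (hc2 : c ≤ n) (hm : 1 ≤ m) {t : ℤ}
    (ht : t + PABC ι n c = m) : beta A ι (occPos ι c m) = bY A ι n c t := by
  refine beta_Y hadm hc1 hc2 (hA.zero c) (halt c hc1) ?_ hm ht
  intro h
  have := halt (c - 1) h (by omega)
  rw [show c - 1 + 1 = c by omega] at this
  exact this.symm

theorem Ssj_pos (hadm : Admissible n ι) {d : ℚ} {A : ℕ → ℕ → ℤ} (hA : CartOK n d A)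
    (halt : AltAll n ι) {c m : ℕ} (hc1 : 1 ≤ c) (hc2 : c ≤ n) (hm : 1 ≤ m) {t : ℤ}
    (ht : t + PABC ι n c = m) {φ : ℕ → ℚ} (h : 0 < φ (occPos ι c m)) :
    Ssj A ι m c φ = φ - φ (occPos ι c m) • bY A ι n c t := by
  unfold Ssj Sop
  rw [if_pos h, beta_bY hadm hA halt hc1 hc2 hm ht]

theorem Ssj_neg (hadm : Admissible n ι) {d : ℚ} {A : ℕ → ℕ → ℤ} (hA : CartOK n d A)
    (halt : AltAll n ι) {c m : ℕ} (hc1 : 1 ≤ c) (hc2 : c ≤ n) (hm : 1 ≤ m) {t : ℤ}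
    (ht : t + PABC ι n c = m) {φ : ℕ → ℚ} (h : φ (occPos ι c m) < 0) :
    Ssj A ι m c φ = φ ∨
      Ssj A ι m c φ = φ - φ (occPos ι c m) • bY A ι n c (t - 1) := by
  unfold Ssj Sop
  rw [if_neg (by linarith)]
  obtain ⟨m, rfl⟩ : ∃ u, m = u + 1 := ⟨m - 1, by omega⟩
  rw [kminus_occ hadm hc1 hc2]
  rcases Nat.eq_zero_or_pos m with rfl | hm'
  · left
    simp [occPos, beta]
  · right
    rw [beta_bY hadm hA halt hc1 hc2 hm' (t := t - 1) (by push_cast at ht; omega)]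

theorem Ssj_zero {A : ℕ → ℕ → ℤ} {c m : ℕ} {φ : ℕ → ℚ} (h : φ (occPos ι c m) = 0) :
    Ssj A ι m c φ = φ := by
  unfold Ssj Sop
  rw [h]
  simp

theorem step_lemma (hadm : Admissible n ι) {d : ℚ} (hd : 0 < d) {A : ℕ → ℕ → ℤ}
    (hA : CartOK n d A) (halt : AltAll n ι) {box : ℤ → ℕ → ℕ → ℚ}
    (hbox : ∀ r e, 1 ≤ e → e ≤ 2 * n → box r e = gbox ι n d r e)
    {c m : ℕ} (hc1 : 1 ≤ c) (hc2 : c ≤ n) (hm : 1 ≤ m)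
    {extra : ℕ → ℚ} (hex : extra (occPos ι c m) = 0)
    {s : ℤ} {k a : ℕ} {f : ℕ → ℕ} (hV : Val n a k f) :
    ∃ g : ℕ → ℕ, Val n a k g ∧ (∀ i, i < a → g i = f i) ∧
      (c < n → ∀ i, n + 1 ≤ f i → n + 1 ≤ g i) ∧
      (k = n → a = 1 → Absd n k f → Absd n k g) ∧
      Ssj A ι m c (extra + tabF box s k a f) = extra + tabF box s k a g := by
  obtain ⟨t, ht⟩ : ∃ t : ℤ, t + PABC ι n c = m := ⟨m - PABC ι n c, by ring⟩
  have hw : (0 : ℚ) < (if c = n then d else 1) := by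
    split_ifs
    · exact hd
    · exact one_pos
  have hev : ∀ r e, 1 ≤ e → e ≤ 2 * n → box r e (occPos ι c m)
      = (if c = n then d else 1) * coefI n c t r e := by
    intro r e h1 h2
    rw [hbox r e h1 h2, gbox_eval hadm hc1 hc2 hm ht d r h1 h2]
  have hd1 : ∀ u : ℤ, box u (c + 1) - box u c
      = - ((if c = n then d else 1 : ℚ) • bY A ι n c u) := by
    intro u
    rw [hbox _ _ (by omega) (by omega), hbox _ _ (by omega) (by omega),
      gbox_diff1 hA hc1 hc2]
  have hd2 : ∀ u : ℤ, c < n → box (u - n + c) (2 * n - c + 1) - box (u - n + c) (2 * n - c)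
      = - ((if c = n then d else 1 : ℚ) • bY A ι n c u) := by
    intro u hcn
    rw [hbox _ _ (by omega) (by omega), hbox _ _ (by omega) (by omega),
      gbox_diff2 hA hc1 hcn]
  have hval : (extra + tabF box s k a f) (occPos ι c m) = tabF box s k a f (occPos ι c m) := by
    rw [Pi.add_apply, hex, zero_add]
  rcases lt_trichotomy (tabF box s k a f (occPos ι c m)) 0 with h | h | h
  · rcases Ssj_neg hadm hA halt hc1 hc2 hm ht (hval.trans_lt h) with h' | h'
    · exact ⟨f, hV, fun _ _ => rfl, fun _ _ h => h, fun _ _ h => h, h'⟩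
    · obtain ⟨g, g1, g2, g3, g4, g5⟩ := core_down hc1 hc2 hw hev (hd1 _) (hd2 _) hV h
      refine ⟨g, g1, g2, g3, g4, ?_⟩
      rw [h', hval, g5]
      abel
  · exact ⟨f, hV, fun _ _ => rfl, fun _ _ h => h, fun _ _ h => h, Ssj_zero (hval.trans h)⟩
  · obtain ⟨g, g1, g2, g3, g4, g5⟩ := core_up hc1 hc2 hw hev (hd1 _) (hd2 _) hV h
    refine ⟨g, g1, g2, g3, g4, ?_⟩
    rw [Ssj_pos hadm hA halt hc1 hc2 hm ht (h.trans_eq hval.symm), hval, g5]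
    abel

theorem cartB_ok (hn : 2 ≤ n) : CartOK n 1 (cartanB n) := by
  constructor
  · intro c h1 h2
    unfold cartanB
    rw [if_neg (by omega), if_neg (by omega), if_pos (by omega)]
    simp
  · intro c h1 h2
    unfold cartanB
    rw [if_neg (by omega), if_neg (by omega), if_pos (by omega)]
    simp
  · unfold cartanB
    rw [if_neg (by omega), if_pos (by omega)]
    norm_num
  · intro c i h1 h2 h3
    unfold cartanB
    rw [if_neg (by omega), if_neg (by omega), if_neg (by omega)]

theorem cartC_ok (hn : 2 ≤ n) : CartOK n 2 (cartanC n) := by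
  constructor
  · intro c h1 h2
    unfold cartanC
    rw [if_neg (by omega)]
    by_cases h : c + 1 = n
    · rw [if_pos (by omega), if_pos h]
      norm_num
    · rw [if_neg (by omega), if_pos (by omega), if_neg h]
      norm_num
  · intro c h1 h2
    unfold cartanC
    rw [if_neg (by omega), if_neg (by omega), if_pos (by omega)]
    simp
  · unfold cartanC
    rw [if_neg (by omega), if_neg (by omega), if_pos (by omega)]
    norm_num
  · intro c i h1 h2 h3
    unfold cartanC
    rw [if_neg (by omega), if_neg (by omega), if_neg (by omega)]

theorem altB (h : Adapted n (cartanB n) ι) : AltAll n ι := by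
  intro c h1 h2
  apply h (c + 1) c (by omega) h2 h1 (by omega) (by omega)
  unfold cartanB
  split_ifs <;> omega

theorem altC (h : Adapted n (cartanC n) ι) : AltAll n ι := by
  intro c h1 h2
  apply h (c + 1) c (by omega) h2 h1 (by omega) (by omega)
  unfold cartanC
  split_ifs <;> omega

theorem closedB (hn : 2 ≤ n) (hadm : Admissible n ι) (had : Adapted n (cartanB n) ι) :
    ∀ T ∈ TabB ι n, ∀ m j, 1 ≤ m → 1 ≤ j → j ≤ n → Ssj (cartanB n) ι m j T ∈ TabB ι n := by
  rintro T ⟨k, s, f, hk1, hk2, hr, hmono, habs, hs, rfl⟩ m c hm hc1 hc2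
  obtain ⟨g, g1, _, _, g4, g5⟩ := step_lemma hadm one_pos (cartB_ok hn) (altB had)
    (box := boxB ι n) (fun r e _ h => boxB_eq r h) hc1 hc2 hm (extra := 0) rfl (s := s)
    (k := k) (a := 1) (f := f) ⟨hr, hmono⟩
  rw [zero_add, zero_add] at g5
  exact ⟨k, s, g, hk1, hk2, g1.1, g1.2, fun h => g4 h rfl (habs h), hs, g5⟩

theorem sum_shift {M : Type*} [AddCommMonoid M] (F : ℕ → M) (a k : ℕ) :
    ∑ i ∈ Finset.Icc (a + 1) (k + 1), F i = ∑ i ∈ Finset.Icc a k, F (i + 1) := by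
  symm
  apply Finset.sum_nbij' (fun i => i + 1) (fun i => i - 1)
  all_goals
    intro i hi
    simp only [Finset.mem_Icc] at *
  · omega
  · omega
  · omega
  · omega

theorem tab_split (box : ℤ → ℕ → ℕ → ℚ) (s : ℤ) {k : ℕ} (hk : 1 ≤ k) (f : ℕ → ℕ) :
    tab box s k f = box (s + k - 1) (f 1) + tabF box s k 2 f := by
  unfold tab tabF
  rw [← Finset.add_sum_Ioc_eq_sum_Icc hk]
  rfl

theorem spin_insert (hn : 2 ≤ n) (s : ℤ) {k : ℕ} (hk : 1 ≤ k) {f g : ℕ → ℕ} (hf1 : f 1 = 0)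
    (hg1 : g 1 = 0) (hg2 : g 2 = n + 1) (hfg : ∀ i, 2 ≤ i → g (i + 1) = f i) :
    tab (boxC ι n) s (k + 1) g
      = tab (boxC ι n) s k f - bY (cartanC n) ι n n (s + k - 1) := by
  rw [tab_split _ _ hk, tab_split _ _ (by omega), hf1, hg1]
  have h1 : tabF (boxC ι n) s (k + 1) 2 g
      = boxC ι n (s + k - 1) (n + 1) + tabF (boxC ι n) s k 2 f := by
    unfold tabF
    rw [← Finset.add_sum_Ioc_eq_sum_Icc (show 2 ≤ k + 1 by omega), hg2]
    congr 1
    · congr 1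
      push_cast
      ring
    · have : Finset.Ioc 2 (k + 1) = Finset.Icc (2 + 1) (k + 1) := by
        ext x
        simp only [Finset.mem_Ioc, Finset.mem_Icc]
        omega
      rw [this, sum_shift]
      apply Finset.sum_congr rfl
      intro i hi
      rw [Finset.mem_Icc] at hi
      rw [hfg i hi.1]
      congr 1
      push_cast
      ring
  have e0 : ∀ r : ℤ, boxC ι n r 0 = Yc ι n r n := by
    intro r
    unfold boxC Yc
    rw [if_pos rfl]
  have hl : ((cartanC n n (n - 1) : ℤ) : ℚ) = -1 := by
    have := (cartC_ok hn).last
    linarith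
  rw [h1, e0, e0, boxC_eq hn _ (by omega) (by omega)]
  unfold gbox bY Zc
  rw [if_neg (show ¬ n + 1 ≤ n by omega), Yc_big, hl, show 2 * n - (n + 1) = n - 1 by omega,
      show 2 * n + 1 - (n + 1) = n by omega, if_pos rfl, if_neg (show ¬ n - 1 = n by omega),
      show s + k - 1 + ((n + 1 : ℕ) : ℤ) - n = s + k - 1 + 1 by push_cast; ring,
      show s + ((k + 1 : ℕ) : ℤ) - 1 = s + k - 1 + 1 by push_cast; ring]
  module

theorem closedC (hn : 2 ≤ n) (hadm : Admissible n ι) (had : Adapted n (cartanC n) ι) :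
    ∀ T ∈ TabC ι n, ∀ m j, 1 ≤ m → 1 ≤ j → j ≤ n → Ssj (cartanC n) ι m j T ∈ TabC ι n := by
  rintro T ⟨k, s, f, hcond, rfl⟩ m c hm hc1 hc2
  rcases hcond with ⟨hk1, hk2, hr, hmono, hs⟩ | ⟨hf1, hk1, hk2, hr, hmono, hs⟩
  · obtain ⟨g, g1, _, _, g4, g5⟩ := step_lemma hadm two_pos (cartC_ok hn) (altC had)
      (box := boxC ι n) (fun r e h1 h => boxC_eq hn r h1 h) hc1 hc2 hm (extra := 0) rfl (s := s)
      (k := k) (a := 1) (f := f) ⟨hr, hmono⟩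
    rw [zero_add, zero_add] at g5
    exact ⟨k, s, g, Or.inl ⟨hk1, hk2, g1.1, g1.2, hs⟩, g5⟩
  · have hV : Val n 2 k f := ⟨fun i h1 h2 => by have := hr i h1 h2; omega, hmono⟩
    obtain ⟨t, ht⟩ : ∃ t : ℤ, t + PABC ι n c = m := ⟨m - PABC ι n c, by ring⟩
    have e0 : boxC ι n (s + k - 1) 0 (occPos ι c m) = ind (n = c ∧ s + k - 1 = t) := by
      have : boxC ι n (s + k - 1) 0 = Yc ι n (s + k - 1) n := by
        unfold boxC Yc
        rw [if_pos rfl]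
      rw [this, Yc_eval hadm hc1 hc2 hm ht]
      unfold ind
      congr
    by_cases hcn : c < n
    · obtain ⟨g, g1, g2, g3, g4, g5⟩ := step_lemma hadm two_pos (cartC_ok hn) (altC had)
        (box := boxC ι n) (fun r e h1 h => boxC_eq hn r h1 h) hc1 hc2 hm
        (extra := boxC ι n (s + k - 1) 0) (by rw [e0, ind_neg (by omega)]) (s := s)
        (k := k) (a := 2) (f := f) hV
      have hg1 : g 1 = 0 := (g2 1 (by omega)).trans hf1
      refine ⟨k, s, g, Or.inr ⟨hg1, hk1, hk2, ?_, g1.2, hs⟩, ?_⟩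
      · intro i h1 h2
        exact ⟨g3 hcn i (hr i h1 h2).1, (g1.1 i h1 h2).2⟩
      · rw [tab_split _ _ hk1, hf1, g5, tab_split _ _ hk1, hg1]
    · obtain rfl : c = n := by omega
      have hx : tab (boxC ι c) s k f (occPos ι c m)
          = ind (s + k - 1 = t) - 2 * ind (2 ≤ k ∧ f 2 = c + 1 ∧ s + k - 1 = t) := by
        have hev : ∀ r e, 1 ≤ e → e ≤ 2 * c → boxC ι c r e (occPos ι c m)
            = (2 : ℚ) * coefI c c t r e := by
          intro r e h1 h2
          rw [boxC_eq hn r h1 h2, gbox_eval hadm hc1 hc2 hm ht 2 r h1 h2, if_pos rfl]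
        rw [tab_split _ _ hk1, hf1, Pi.add_apply, e0, tabF_eval hev hV,
          ind_neg (p := ∃ i ∈ Finset.Icc 2 k, f i = c ∧ _) (by
            rintro ⟨i, hi, h1, _⟩
            rw [Finset.mem_Icc] at hi
            have := hr i hi.1 hi.2
            omega),
          ind_neg (p := ∃ i ∈ Finset.Icc 2 k, c < c ∧ f i + c = 2 * c ∧ _) (by
            rintro ⟨i, hi, h1, _⟩
            omega),
          ind_neg (p := ∃ i ∈ Finset.Icc 2 k, c < c ∧ f i + c = 2 * c + 1 ∧ _) (by
            rintro ⟨i, hi, h1, _⟩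
            omega),
          ind_congr (p := c = c ∧ s + k - 1 = t) (q := s + k - 1 = t) (by tauto),
          ind_congr (p := ∃ i ∈ Finset.Icc 2 k, f i = c + 1 ∧ s + (k : ℤ) - i + 1 = t)
            (q := 2 ≤ k ∧ f 2 = c + 1 ∧ s + k - 1 = t)]
        · ring
        · constructor
          · rintro ⟨i, hi, h1, h2⟩
            rw [Finset.mem_Icc] at hi
            have h3 := hV.le (i := 2) (i' := i) le_rfl hi.1 hi.2
            have h4 := hr 2 le_rfl (by omega)
            obtain rfl : i = 2 := by omega
            exact ⟨hi.2, h1, by push_cast at h2; omega⟩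
          · rintro ⟨h1, h2, h3⟩
            exact ⟨2, Finset.mem_Icc.2 ⟨le_rfl, h1⟩, h2, by push_cast; omega⟩
      have hkeep : tab (boxC ι c) s k f ∈ TabC ι c :=
        ⟨k, s, f, Or.inr ⟨hf1, hk1, hk2, hr, hmono, hs⟩, rfl⟩
      by_cases hst : s + k - 1 = t
      · by_cases hf2 : 2 ≤ k ∧ f 2 = c + 1
        · rw [ind_pos hst, ind_pos ⟨hf2.1, hf2.2, hst⟩] at hx
          rcases Ssj_neg hadm (cartC_ok hn) (altC had) hc1 hc2 hm ht
            (φ := tab (boxC ι c) s k f) (by rw [hx]; norm_num) with h | h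
          · rw [h]
            exact hkeep
          · obtain ⟨u, rfl⟩ : ∃ u, k = u + 1 := ⟨k - 1, by omega⟩
            refine ⟨u, s, fun i => if i = 1 then 0 else f (i + 1), Or.inr ⟨if_pos rfl,
              by omega, by omega, ?_, ?_, hs⟩, ?_⟩
            · intro i h1 h2
              dsimp only
              rw [if_neg (show ¬ i = 1 by omega)]
              exact hr (i + 1) (by omega) (by omega)
            · intro i h1 h2
              dsimp only
              rw [if_neg (show ¬ i = 1 by omega), if_neg (show ¬ i + 1 = 1 by omega)]
              exact hmono (i + 1) (by omega) (by omega)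
            · rw [h, hx, spin_insert hn s (k := u)
                (f := fun i => if i = 1 then 0 else f (i + 1)) (g := f) (by omega)
                (if_pos rfl) hf1 hf2.2 (fun i hi => by rw [if_neg (by omega)]),
                show t - 1 = s + u - 1 by push_cast at hst; omega]
              module
        · rw [ind_pos hst, ind_neg (by tauto)] at hx
          rw [Ssj_pos hadm (cartC_ok hn) (altC had) hc1 hc2 hm ht
            (φ := tab (boxC ι c) s k f) (by rw [hx]; norm_num)]
          have hkn : k ≤ c := by
            by_contra hcon
            have h3 := hV.le (i := 2) (i' := k) le_rfl (by omega) le_rfl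
            have h4 := hr 2 le_rfl (by omega)
            have h5 := hr k (by omega) le_rfl
            exact hf2 ⟨by omega, by omega⟩
          refine ⟨k + 1, s, fun i => if i = 1 then 0 else if i = 2 then c + 1 else f (i - 1),
            Or.inr ⟨if_pos rfl, by omega, by omega, ?_, ?_, hs⟩, ?_⟩
          · intro i h1 h2
            dsimp only
            rw [if_neg (show ¬ i = 1 by omega)]
            split_ifs with h3
            · omega
            · exact hr (i - 1) (by omega) (by omega)
          · intro i h1 h2
            dsimp only
            rw [if_neg (show ¬ i = 1 by omega), if_neg (show ¬ i + 1 = 1 by omega),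
              if_neg (show ¬ i + 1 = 2 by omega),
              Nat.add_sub_cancel]
            split_ifs with h3
            · subst h3
              have := hr 2 le_rfl (by omega)
              have : f 2 ≠ c + 1 := fun h => hf2 ⟨by omega, h⟩
              omega
            · have := hmono (i - 1) (by omega) (by omega)
              rwa [show i - 1 + 1 = i by omega] at this
          · rw [hx, spin_insert hn s hk1 (f := f)
              (g := fun i => if i = 1 then 0 else if i = 2 then c + 1 else f (i - 1))
              hf1 (if_pos rfl) (by simp)
              (fun i hi => by
                rw [if_neg (show ¬ i + 1 = 1 by omega), if_neg (show ¬ i + 1 = 2 by omega),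
                  Nat.add_sub_cancel]), hst]
            module
      · rw [Ssj_zero]
        · exact hkeep
        · rw [hx, ind_neg hst, ind_neg (by tauto)]
          ring

end Boxes

/-- Proposition 4.2 (closure): for adapted sequences of type B or C, the sets `Tab_{B,ι}`
and `Tab_{C,ι}` are closed under all operators `S_{m,j}`. -/
theorem Tab_BC_closed (n : ℕ) (hn : 2 ≤ n) (ι : ℕ → ℕ) (hadm : Admissible n ι) :
    (Adapted n (cartanB n) ι →
      ∀ T ∈ TabB ι n, ∀ m j, 1 ≤ m → 1 ≤ j → j ≤ n →
        Ssj (cartanB n) ι m j T ∈ TabB ι n) ∧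
    (Adapted n (cartanC n) ι →
      ∀ T ∈ TabC ι n, ∀ m j, 1 ≤ m → 1 ≤ j → j ≤ n →
        Ssj (cartanC n) ι m j T ∈ TabC ι n) := by
  exact ⟨closedB hn hadm, closedC hn hadm⟩
end

section
/- Let n ≥ 4, let A be the Cartan matrix of type D_n and ι an admissible sequence adapted to A. Then the set Tab_{D,ι} of column tableaux of type D is closed under the action of all operators S_{m,j}: for every T ∈ Tab_{D,ι}, every m ≥ 1 and every j ∈ I, one has S_{m,j}T ∈ Tab_{D,ι}. -/
namespace TabDProof

section occ
variable {n : ℕ} {ι : ℕ → ℕ}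

theorem occ_spec (hadm : Admissible n ι) {j : ℕ} (h1 : 1 ≤ j) (h2 : j ≤ n) (s : ℕ) :
    occPos ι j s < occPos ι j (s+1) ∧ ι (occPos ι j (s+1)) = j := by
  have hne : {k | occPos ι j s < k ∧ ι k = j}.Nonempty := by
    obtain ⟨k, hk, hk'⟩ := hadm.2.2 j h1 h2 (occPos ι j s + 1)
    exact ⟨k, by simpa using hk, hk'⟩
  exact Nat.sInf_mem hne

theorem occ_le {j s k : ℕ} (h : occPos ι j s < k) (hk : ι k = j) :
    occPos ι j (s+1) ≤ k := Nat.sInf_le ⟨h, hk⟩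

theorem occ_strictMono (hadm : Admissible n ι) {j : ℕ} (h1 : 1 ≤ j) (h2 : j ≤ n) :
    StrictMono (occPos ι j) := strictMono_nat_of_lt_succ fun s => (occ_spec hadm h1 h2 s).1

theorem occ_letter (hadm : Admissible n ι) {j : ℕ} (h1 : 1 ≤ j) (h2 : j ≤ n) {s : ℕ}
    (hs : 1 ≤ s) : ι (occPos ι j s) = j := by
  obtain ⟨t, rfl⟩ := Nat.exists_eq_add_of_le' hs
  exact (occ_spec hadm h1 h2 t).2

theorem occ_pos (hadm : Admissible n ι) {j : ℕ} (h1 : 1 ≤ j) (h2 : j ≤ n) {s : ℕ}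
    (hs : 1 ≤ s) : 1 ≤ occPos ι j s := by
  have := occ_strictMono hadm h1 h2 hs
  omega

theorem occ_surj (hadm : Admissible n ι) {l : ℕ} (hl : 1 ≤ l) :
    ∃ t, 1 ≤ t ∧ occPos ι (ι l) t = l := by
  obtain ⟨h1, h2⟩ := hadm.1 l hl
  have hm := occ_strictMono hadm h1 h2
  by_contra hcon
  push Not at hcon
  have : ∀ t, occPos ι (ι l) t < l := by
    intro t
    induction t with
    | zero => simp only [occPos]; omega
    | succ t ih => exact lt_of_le_of_ne (occ_le ih rfl) (hcon (t+1) (by omega))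
  have h := hm.id_le l
  have := this l
  simp only [id] at h
  omega

theorem occ_eq_iff (hadm : Admissible n ι) {i j s t : ℕ} (hi : 1 ≤ i ∧ i ≤ n)
    (hj : 1 ≤ j ∧ j ≤ n) (hs : 1 ≤ s) (ht : 1 ≤ t) :
    occPos ι i s = occPos ι j t ↔ s = t ∧ i = j := by
  constructor
  · intro h
    have e : i = j := by
      rw [← occ_letter hadm hi.1 hi.2 hs, h, occ_letter hadm hj.1 hj.2 ht]
    subst e
    exact ⟨(occ_strictMono hadm hi.1 hi.2).injective h, rfl⟩
  · rintro ⟨rfl, rfl⟩; rfl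

theorem kplus_occ (hadm : Admissible n ι) {j : ℕ} (h1 : 1 ≤ j) (h2 : j ≤ n) {s : ℕ}
    (hs : 1 ≤ s) : kplus ι (occPos ι j s) = occPos ι j (s+1) := by
  unfold kplus
  rw [occ_letter hadm h1 h2 hs]
  rfl

theorem kminus_occ (hadm : Admissible n ι) {j : ℕ} (h1 : 1 ≤ j) (h2 : j ≤ n) {s : ℕ} :
    kminus ι (occPos ι j (s+1)) = occPos ι j s := by
  unfold kminus
  rw [occ_letter hadm h1 h2 (by omega)]
  have hm := occ_strictMono hadm h1 h2
  rcases Nat.eq_zero_or_pos s with rfl | hs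
  · have : {l | 0 < l ∧ l < occPos ι j (0+1) ∧ ι l = j} = ∅ := by
      ext l
      simp only [Set.mem_ofPred_eq, Set.mem_empty_iff_false, iff_false]
      rintro ⟨a, b, c⟩
      have := occ_le (s := 0) (by simpa [occPos] using a) c
      omega
    rw [this]; simp [occPos]
  · apply IsGreatest.csSup_eq
    refine ⟨⟨occ_pos hadm h1 h2 hs, hm (by omega), occ_letter hadm h1 h2 hs⟩, ?_⟩
    rintro l ⟨a, b, c⟩
    by_contra hlt
    have := occ_le (s := s) (by omega) c
    omega

theorem firstOcc_eq (j : ℕ) : firstOcc ι j = occPos ι j 1 := by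
  simp [firstOcc, occPos, Nat.succ_le_iff]

theorem between {A : ℕ → ℕ → ℤ} (hadm : Admissible n ι) (hadap : Adapted n A ι) {i j : ℕ}
    (hi : 1 ≤ i ∧ i ≤ n) (hj : 1 ≤ j ∧ j ≤ n) (hij : i ≠ j) (hA : A i j ≠ 0) {t : ℕ}
    (ht : 1 ≤ t) :
    (∃ p, occPos ι j t < p ∧ p < occPos ι j (t+1) ∧ ι p = i) ∧
    (∃ p, occPos ι i t < p ∧ p < occPos ι i (t+1) ∧ ι p = j) := by
  constructor
  · by_contra hcon
    push Not at hcon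
    have hj1 := occ_letter hadm hj.1 hj.2 ht
    have hj2 := occ_letter hadm hj.1 hj.2 (s := t+1) (by omega)
    refine hadap i j hi.1 hi.2 hj.1 hj.2 hij hA (occPos ι j t) (occPos ι j (t+1))
      (occ_pos hadm hj.1 hj.2 ht) (occ_spec hadm hj.1 hj.2 t).1 (Or.inr hj1) (Or.inr hj2) ?_
      (hj1.trans hj2.symm)
    intro m h1 h2
    refine ⟨hcon m h1 h2, fun h => ?_⟩
    have := occ_le h1 h
    omega
  · by_contra hcon
    push Not at hcon
    have hj1 := occ_letter hadm hi.1 hi.2 ht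
    have hj2 := occ_letter hadm hi.1 hi.2 (s := t+1) (by omega)
    refine hadap i j hi.1 hi.2 hj.1 hj.2 hij hA (occPos ι i t) (occPos ι i (t+1))
      (occ_pos hadm hi.1 hi.2 ht) (occ_spec hadm hi.1 hi.2 t).1 (Or.inl hj1) (Or.inl hj2) ?_
      (hj1.trans hj2.symm)
    intro m h1 h2
    refine ⟨fun h => ?_, hcon m h1 h2⟩
    have := occ_le h1 h
    omega

/-- interlacing of the occurrences of two adjacent letters -/
theorem interlace {A : ℕ → ℕ → ℤ} (hadm : Admissible n ι) (hadap : Adapted n A ι) {i j : ℕ}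
    (hi : 1 ≤ i ∧ i ≤ n) (hj : 1 ≤ j ∧ j ≤ n) (hij : i ≠ j) (hA : A i j ≠ 0 ∨ A j i ≠ 0)
    (hf : occPos ι j 1 < occPos ι i 1) (t : ℕ) (ht : 1 ≤ t) :
    occPos ι j t < occPos ι i t ∧ occPos ι i t < occPos ι j (t+1) := by
  have hb : ∀ t, 1 ≤ t → (∃ p, occPos ι j t < p ∧ p < occPos ι j (t+1) ∧ ι p = i) ∧
    (∃ p, occPos ι i t < p ∧ p < occPos ι i (t+1) ∧ ι p = j) := by
    intro t ht
    rcases hA with hA | hA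
    · exact between hadm hadap hi hj hij hA ht
    · exact (between hadm hadap hj hi hij.symm hA ht).symm
  induction t, ht using Nat.le_induction with
  | base =>
    refine ⟨hf, ?_⟩
    obtain ⟨p, h1, h2, h3⟩ := (hb 1 le_rfl).1
    have : occPos ι i (0+1) ≤ p := occ_le (by simp [occPos]; omega) h3
    simp only [zero_add] at this
    omega
  | succ t ht ih =>
    obtain ⟨p, h1, h2, h3⟩ := (hb t ht).2
    have a1 : occPos ι j (t+1) ≤ p := occ_le (by omega) h3
    obtain ⟨q, g1, g2, g3⟩ := (hb (t+1) (by omega)).1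
    have a2 : occPos ι i (t+1) ≤ q := occ_le (by omega) g3
    omega

/-- index shift of the neighbour `i` in `β_{M,j}` -/
theorem mem_between {A : ℕ → ℕ → ℤ} (hadm : Admissible n ι) (hadap : Adapted n A ι) {i j : ℕ}
    (hi : 1 ≤ i ∧ i ≤ n) (hj : 1 ≤ j ∧ j ≤ n) (hij : i ≠ j) (hA : A i j ≠ 0 ∨ A j i ≠ 0)
    {M t : ℕ} (hM : 1 ≤ M) (ht : 1 ≤ t) :
    (occPos ι j M < occPos ι i t ∧ occPos ι i t < occPos ι j (M+1)) ↔
      t = M + pval ι i j := by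
  have mi := occ_strictMono hadm hi.1 hi.2
  have mj := occ_strictMono hadm hj.1 hj.2
  unfold pval
  rw [firstOcc_eq, firstOcc_eq]
  have hne : occPos ι i 1 ≠ occPos ι j 1 := by
    rw [Ne, occ_eq_iff hadm hi hj le_rfl le_rfl]; tauto
  split_ifs with h
  · have I := interlace hadm hadap hj hi hij.symm hA.symm h
    constructor
    · rintro ⟨a, b⟩
      have h1 := (I t ht)
      have h2 := I M hM
      have h3 := I (M+1) (by omega)
      have l1 : M < t := by
        by_contra hc
        have := mi.monotone (show t ≤ M by omega)
        omega
      have l2 : t < M + 2 := by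
        by_contra hc
        have := mi.monotone (show M + 1 + 1 ≤ t by omega)
        omega
      omega
    · rintro rfl
      exact ⟨(I M hM).2, (I (M+1) (by omega)).1⟩
  · have I := interlace hadm hadap hi hj hij hA (by omega)
    constructor
    · rintro ⟨a, b⟩
      have h2 := I M hM
      have h3 := I t ht
      have l1 : M < t + 1 := by
        by_contra hc
        have := mj.monotone (show t + 1 ≤ M by omega)
        omega
      have l2 : t < M + 1 := by
        by_contra hc
        have := mj.monotone (show M + 1 ≤ t by omega)
        omega
      omega
    · intro h
      have h' : t = M := by omega
      rw [h']
      exact I M hM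

theorem xsj_eval (hadm : Admissible n ι) {j0 m : ℕ} (hj : 1 ≤ j0 ∧ j0 ≤ n) (hm : 1 ≤ m)
    (s : ℤ) (i : ℕ) :
    xsj ι n s i (occPos ι j0 m) = if s = m ∧ i = j0 then 1 else 0 := by
  unfold xsj
  by_cases h : 1 ≤ s ∧ 1 ≤ i ∧ i ≤ n
  · rw [if_pos h]
    unfold xc
    have := occ_eq_iff hadm hj h.2 hm (t := s.toNat) (by omega)
    refine if_congr (this.trans ?_) rfl rfl
    constructor <;> rintro ⟨a, b⟩ <;> constructor <;> omega
  · rw [if_neg h, if_neg (by rintro ⟨rfl, rfl⟩; omega)]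
    rfl

theorem xsj_zero (s : ℤ) (n : ℕ): xsj ι n s 0 = 0 := by simp [xsj]

/-- general form of `β_{M,j}` -/
theorem beta_general (hadm : Admissible n ι) (hadap : Adapted n (cartanD n) ι) {j : ℕ}
    (hj : 1 ≤ j ∧ j ≤ n) {M : ℕ} (hM : 1 ≤ M) :
    beta (cartanD n) ι (occPos ι j M) = xsj ι n M j + xsj ι n (M+1) j +
      ∑ i ∈ (Finset.Icc 1 n).erase j, (cartanD n j i : ℚ) • xsj ι n (M + pval ι i j) i := by
  have mj := occ_strictMono hadm hj.1 hj.2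
  have hpos := occ_pos hadm hj.1 hj.2 hM
  unfold beta
  rw [if_neg (by omega), kplus_occ hadm hj.1 hj.2 hM, occ_letter hadm hj.1 hj.2 hM]
  have e1 : xsj ι n M j = xc (occPos ι j M) := by simp [xsj, hM, hj.1, hj.2]
  have e2 : xsj ι n (M+1) j = xc (occPos ι j (M+1)) := by
    unfold xsj
    rw [if_pos (by omega)]
    congr 1
  rw [e1, e2]
  suffices h : (∑ l ∈ Finset.Ioo (occPos ι j M) (occPos ι j (M+1)),
      (cartanD n j (ι l) : ℚ) • xc l) = ∑ i ∈ (Finset.Icc 1 n).erase j,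
        (cartanD n j i : ℚ) • xsj ι n (M + pval ι i j) i by
    rw [h]; abel
  funext l
  simp only [Finset.sum_apply, Pi.smul_apply, smul_eq_mul]
  have hL : ∑ x ∈ Finset.Ioo (occPos ι j M) (occPos ι j (M+1)), (cartanD n j (ι x) : ℚ) * xc x l
      = if l ∈ Finset.Ioo (occPos ι j M) (occPos ι j (M+1)) then (cartanD n j (ι l) : ℚ) else 0 := by
    simp only [xc, mul_ite, mul_one, mul_zero]
    rw [Finset.sum_ite_eq]
  rw [hL]
  rcases Nat.eq_zero_or_pos l with rfl | hl
  · rw [if_neg (by simp)]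
    symm
    apply Finset.sum_eq_zero
    intro i hi
    have hi' : 1 ≤ i ∧ i ≤ n := by simpa using Finset.mem_of_mem_erase hi
    have := occ_pos hadm hi'.1 hi'.2 (s := ((M:ℤ) + pval ι i j).toNat) (by omega)
    unfold xsj
    rw [if_pos (by omega)]
    unfold xc
    rw [if_neg (by omega)]
    simp
  · obtain ⟨t, ht, htl⟩ := occ_surj hadm hl
    have hil := hadm.1 l hl
    generalize ι l = i at *
    subst htl
    simp only [xsj_eval hadm hil ht]
    by_cases hij : i = j
    · subst hij
      rw [if_neg, Finset.sum_eq_zero]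
      · intro x hx
        rw [if_neg]
        · simp
        · have := Finset.ne_of_mem_erase hx
          tauto
      · rw [Finset.mem_Ioo, mj.lt_iff_lt, mj.lt_iff_lt]
        omega
    · rw [Finset.sum_eq_single i]
      · by_cases hA : cartanD n j i = 0
        · rw [hA]; simp
        · have := mem_between hadm hadap hil hj hij (Or.inr hA) hM ht
          rw [if_congr (Finset.mem_Ioo.trans this) rfl rfl]
          split_ifs with h1 h2 h2
          · simp
          · exact absurd ⟨by exact_mod_cast h1.symm, rfl⟩ h2
          · exact absurd (by exact_mod_cast h2.1.symm) h1
          · simp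
      · intro b _ hb
        rw [if_neg (by tauto)]; simp
      · intro h
        exact absurd (by simp [hij, hil]) h

end occ


section betas
variable {n : ℕ} {ι : ℕ → ℕ}

theorem beta_nb (hadm : Admissible n ι) (hadap : Adapted n (cartanD n) ι) {j : ℕ}
    (hj : 1 ≤ j ∧ j ≤ n) {M : ℤ} (hM : 1 ≤ M) (N : Finset ℕ)
    (hN : ∀ i ∈ N, i ≤ n ∧ i ≠ j ∧ cartanD n j i = -1)
    (hN' : ∀ i, 1 ≤ i → i ≤ n → i ≠ j → i ∉ N → cartanD n j i = 0) :
    beta (cartanD n) ι (occPos ι j M.toNat) = xsj ι n M j + xsj ι n (M+1) j -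
      ∑ i ∈ N, xsj ι n (M + pval ι i j) i := by
  rw [beta_general hadm hadap hj (by omega)]
  have hMM : (M.toNat : ℤ) = M := by omega
  rw [hMM, sub_eq_add_neg]
  congr 1
  rw [← Finset.sum_neg_distrib]
  have e1 : ∑ i ∈ N, -xsj ι n (M + pval ι i j) i =
      ∑ i ∈ N, (cartanD n j i : ℚ) • xsj ι n (M + pval ι i j) i := by
    apply Finset.sum_congr rfl
    intro i hi
    rw [(hN i hi).2.2]
    simp
  rw [e1]
  have e2 : ∑ i ∈ (Finset.Icc 1 n).erase j, (cartanD n j i : ℚ) • xsj ι n (M + pval ι i j) i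
      = ∑ i ∈ (Finset.range (n+1)).erase j, (cartanD n j i : ℚ) • xsj ι n (M + pval ι i j) i := by
    apply Finset.sum_subset
    · intro i hi
      simp only [Finset.mem_erase, Finset.mem_Icc, Finset.mem_range] at hi ⊢
      omega
    · intro i hi hi'
      simp only [Finset.mem_erase, Finset.mem_Icc, Finset.mem_range] at hi hi'
      have : i = 0 := by omega
      subst this
      simp [xsj_zero]
  rw [e2]
  symm
  apply Finset.sum_subset
  · intro i hi
    simp only [Finset.mem_erase, Finset.mem_range]
    have := hN i hi
    omega
  · intro i hi hi'
    simp only [Finset.mem_erase, Finset.mem_range] at hi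
    rcases Nat.eq_zero_or_pos i with rfl | h
    · simp [xsj_zero]
    · rw [hN' i h (by omega) hi.1 hi']
      simp

theorem PD_zero (hn : 4 ≤ n) : PD ι n 0 = 0 := by
  unfold PD
  rw [if_neg (by omega), if_pos (by omega)]; simp

theorem PD_one (hn : 4 ≤ n) : PD ι n 1 = 0 := by
  unfold PD
  rw [if_neg (by omega), if_pos (by omega)]; simp

theorem PD_succ {j : ℕ} (h1 : 1 ≤ j) (h2 : j + 1 < n) :
    PD ι n (j+1) = PD ι n j + pval ι (j+1) j := by
  unfold PD
  rw [if_neg (by omega), if_pos (by omega), if_neg (by omega), if_pos (by omega),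
    Finset.sum_Icc_succ_top (by omega)]
  simp

theorem PD_n (hn : 4 ≤ n) : PD ι n n = PD ι n (n-2) + pval ι n (n-2) := by
  unfold PD
  rw [if_pos rfl, if_neg (by omega), if_pos (by omega)]

theorem pval_add (hadm : Admissible n ι) {i j : ℕ} (hi : 1 ≤ i ∧ i ≤ n)
    (hj : 1 ≤ j ∧ j ≤ n) (hij : i ≠ j) : pval ι i j + pval ι j i = 1 := by
  unfold pval
  rw [firstOcc_eq, firstOcc_eq]
  have hne : occPos ι i 1 ≠ occPos ι j 1 := by
    rw [Ne, occ_eq_iff hadm hi hj le_rfl le_rfl]; tauto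
  split_ifs <;> omega

theorem low {j : ℕ} (h1 : 1 ≤ j) (h2 : j + 1 ≤ n) (hadm : Admissible n ι) (s : ℤ) :
    xsj ι n (s + PD ι n j + pval ι (j-1) j) (j-1) = xsj ι n (s + PD ι n (j-1) + 1) (j-1) := by
  rcases Nat.lt_or_ge j 2 with h | h
  · have : j - 1 = 0 := by omega
    rw [this, xsj_zero, xsj_zero]
  · obtain ⟨i, rfl⟩ : ∃ i, j = i + 1 := ⟨j-1, by omega⟩
    simp only [Nat.add_sub_cancel]
    rw [PD_succ (by omega) (by omega)]
    have := pval_add hadm (i := i) (j := i+1) (by omega) (by omega) (by omega)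
    congr 1
    omega

theorem beta_lo (hn : 4 ≤ n) (hadm : Admissible n ι) (hadap : Adapted n (cartanD n) ι) {j : ℕ}
    (h1 : 1 ≤ j) (h2 : j + 3 ≤ n) {s : ℤ} (hM : 1 ≤ s + PD ι n j) :
    beta (cartanD n) ι (occPos ι j (s + PD ι n j).toNat) =
      xsj ι n (s + PD ι n j) j + xsj ι n (s + PD ι n j + 1) j
      - xsj ι n (s + PD ι n (j-1) + 1) (j-1) - xsj ι n (s + PD ι n (j+1)) (j+1) := by
  rw [beta_nb hadm hadap (by omega) hM {j-1, j+1}, Finset.sum_pair (by omega),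
    low h1 (by omega) hadm, PD_succ h1 (by omega)]
  · push_cast
    rw [add_assoc s]
    abel_nf
  · intro i hi
    simp only [Finset.mem_insert, Finset.mem_singleton] at hi
    refine ⟨by omega, by omega, ?_⟩
    unfold cartanD
    rw [if_neg (by omega), if_neg (by omega), if_pos (by omega)]
  · intro i _ _ _ hi
    simp only [Finset.mem_insert, Finset.mem_singleton] at hi
    unfold cartanD
    rw [if_neg (by omega)]
    split_ifs <;> omega

theorem beta_n2 (hn : 4 ≤ n) (hadm : Admissible n ι) (hadap : Adapted n (cartanD n) ι)
    {s : ℤ} (hM : 1 ≤ s + PD ι n (n-2)) :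
    beta (cartanD n) ι (occPos ι (n-2) (s + PD ι n (n-2)).toNat) =
      xsj ι n (s + PD ι n (n-2)) (n-2) + xsj ι n (s + PD ι n (n-2) + 1) (n-2)
      - xsj ι n (s + PD ι n (n-3) + 1) (n-3) - xsj ι n (s + PD ι n (n-1)) (n-1)
      - xsj ι n (s + PD ι n n) n := by
  rw [beta_nb hadm hadap (by omega) hM {n-3, n-1, n}, Finset.sum_insert, Finset.sum_pair (by omega)]
  · have := low (ι := ι) (j := n-2) (by omega) (by omega) hadm s
    rw [show n - 2 - 1 = n - 3 by omega] at this
    rw [this]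
    have h1 : PD ι n (n-1) = PD ι n (n-2) + pval ι (n-1) (n-2) := by
      have := PD_succ (ι := ι) (n := n) (j := n-2) (by omega) (by omega)
      rwa [show n - 2 + 1 = n - 1 by omega] at this
    rw [h1, PD_n hn]
    push_cast
    rw [add_assoc s, add_assoc s]
    abel_nf
  · simp only [Finset.mem_insert, Finset.mem_singleton]; omega
  · intro i hi
    simp only [Finset.mem_insert, Finset.mem_singleton] at hi
    refine ⟨by omega, by omega, ?_⟩
    unfold cartanD
    rw [if_neg (by omega), if_neg (by omega), if_pos (by omega)]
  · intro i _ _ _ hi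
    simp only [Finset.mem_insert, Finset.mem_singleton] at hi
    unfold cartanD
    rw [if_neg (by omega)]
    split_ifs <;> omega

theorem beta_n1 (hn : 4 ≤ n) (hadm : Admissible n ι) (hadap : Adapted n (cartanD n) ι)
    {s : ℤ} (hM : 1 ≤ s + PD ι n (n-1)) :
    beta (cartanD n) ι (occPos ι (n-1) (s + PD ι n (n-1)).toNat) =
      xsj ι n (s + PD ι n (n-1)) (n-1) + xsj ι n (s + PD ι n (n-1) + 1) (n-1)
      - xsj ι n (s + PD ι n (n-2) + 1) (n-2) := by
  rw [beta_nb hadm hadap (by omega) hM {n-2}, Finset.sum_singleton]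
  · have := low (ι := ι) (j := n-1) (by omega) (by omega) hadm s
    rw [show n - 1 - 1 = n - 2 by omega] at this
    rw [this]
  · intro i hi
    simp only [Finset.mem_singleton] at hi
    refine ⟨by omega, by omega, ?_⟩
    unfold cartanD
    rw [if_neg (by omega), if_neg (by omega), if_pos (by omega)]
  · intro i _ _ _ hi
    simp only [Finset.mem_singleton] at hi
    unfold cartanD
    rw [if_neg (by omega)]
    split_ifs <;> omega

theorem beta_n (hn : 4 ≤ n) (hadm : Admissible n ι) (hadap : Adapted n (cartanD n) ι)
    {s : ℤ} (hM : 1 ≤ s + PD ι n n) :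
    beta (cartanD n) ι (occPos ι n (s + PD ι n n).toNat) =
      xsj ι n (s + PD ι n n) n + xsj ι n (s + PD ι n n + 1) n
      - xsj ι n (s + PD ι n (n-2) + 1) (n-2) := by
  rw [beta_nb hadm hadap (by omega) hM {n-2}, Finset.sum_singleton]
  · have := pval_add hadm (i := n) (j := n-2) (by omega) (by omega) (by omega)
    have h2 := PD_n (ι := ι) hn
    rw [show s + (PD ι n n : ℤ) + pval ι (n-2) n = s + PD ι n (n-2) + 1 by omega]
  · intro i hi
    simp only [Finset.mem_singleton] at hi
    refine ⟨by omega, by omega, ?_⟩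
    unfold cartanD
    rw [if_neg (by omega), if_neg (by omega), if_pos (by omega)]
  · intro i _ _ _ hi
    simp only [Finset.mem_singleton] at hi
    unfold cartanD
    rw [if_neg (by omega)]
    split_ifs <;> omega

/-- The two moves `e₁ → f₁`, `e₂ → f₂` of colour `j` with their index offsets. -/
structure IsMv (ι : ℕ → ℕ) (n j e₁ f₁ e₂ f₂ : ℕ) (c₁ c₂ : ℤ) : Prop where
  coef : ∀ e m : ℕ, 1 ≤ m → e ≤ 2 * n → (e = 0 → j ≠ n) → ∀ s : ℤ,
    boxD ι n s e (occPos ι j m) =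
      (if e = e₁ ∧ s + c₁ = m then 1 else 0) - (if e = f₁ ∧ s + c₁ + 1 = m then 1 else 0) +
      ((if e = e₂ ∧ s + c₂ = m then 1 else 0) - (if e = f₂ ∧ s + c₂ + 1 = m then 1 else 0))
  diff₁ : ∀ s : ℤ, 1 ≤ s + c₁ → boxD ι n s e₁ - boxD ι n s f₁ =
    beta (cartanD n) ι (occPos ι j (s + c₁).toNat)
  diff₂ : ∀ s : ℤ, 1 ≤ s + c₂ → boxD ι n s e₂ - boxD ι n s f₂ =
    beta (cartanD n) ι (occPos ι j (s + c₂).toNat)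

theorem box0 (s : ℤ) : boxD ι n s 0 = xsj ι n (s + PD ι n n) n := by
  simp [boxD]

theorem box_lo {e : ℕ} (h1 : 1 ≤ e) (h2 : e + 2 ≤ n) (s : ℤ) : boxD ι n s e =
    xsj ι n (s + PD ι n e) e - xsj ι n (s + PD ι n (e-1) + 1) (e-1) := by
  unfold boxD
  rw [if_neg (by omega), if_pos (by omega)]

theorem box_n1 (hn : 4 ≤ n) (s : ℤ) : boxD ι n s (n-1) =
    xsj ι n (s + PD ι n (n-1)) (n-1) + xsj ι n (s + PD ι n n) n
      - xsj ι n (s + PD ι n (n-2) + 1) (n-2) := by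
  unfold boxD
  rw [if_neg (by omega), if_neg (by omega), if_pos (by omega)]

theorem box_n (hn : 4 ≤ n) (s : ℤ) : boxD ι n s n =
    xsj ι n (s + PD ι n n) n - xsj ι n (s + PD ι n (n-1) + 1) (n-1) := by
  unfold boxD
  rw [if_neg (by omega), if_neg (by omega), if_neg (by omega), if_pos (by omega)]

theorem box_bn (hn : 4 ≤ n) (s : ℤ) : boxD ι n s (n+1) =
    xsj ι n (s + PD ι n (n-1)) (n-1) - xsj ι n (s + PD ι n n + 1) n := by
  unfold boxD
  rw [if_neg (by omega), if_neg (by omega), if_neg (by omega), if_neg (by omega),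
    if_pos (by omega)]

theorem box_bn1 (hn : 4 ≤ n) (s : ℤ) : boxD ι n s (n+2) =
    xsj ι n (s + PD ι n (n-2) + 1) (n-2)
      - xsj ι n (s + PD ι n (n-1) + 1) (n-1) - xsj ι n (s + PD ι n n + 1) n := by
  unfold boxD
  rw [if_neg (by omega), if_neg (by omega), if_neg (by omega), if_neg (by omega),
    if_neg (by omega), if_pos (by omega)]

/-- barred box, `t = 2n+1-e` -/
theorem box_bar (hn : 4 ≤ n) {e t : ℕ} (he : e + t = 2 * n + 1) (h1 : 1 ≤ t) (h2 : t + 2 ≤ n)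
    (s : ℤ) : boxD ι n s e =
    xsj ι n (s + PD ι n (t-1) + n - t) (t-1) - xsj ι n (s + PD ι n t + n - t) t := by
  unfold boxD
  rw [if_neg (by omega), if_neg (by omega), if_neg (by omega), if_neg (by omega),
    if_neg (by omega), if_neg (by omega), show 2 * n - e = t - 1 by omega,
    show 2 * n + 1 - e = t by omega]

theorem box_cases (hn : 4 ≤ n) {e : ℕ} (he : e ≤ 2 * n) :
    e = 0 ∨ (1 ≤ e ∧ e + 2 ≤ n) ∨ e = n - 1 ∨ e = n ∨ e = n + 1 ∨ e = n + 2 ∨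
      (∃ t, e + t = 2 * n + 1 ∧ 1 ≤ t ∧ t + 2 ≤ n) := by
  by_cases h : n + 3 ≤ e
  · exact Or.inr (Or.inr (Or.inr (Or.inr (Or.inr (Or.inr
      ⟨2 * n + 1 - e, by omega, by omega, by omega⟩)))))
  · omega

theorem iteL {p q : Prop} [Decidable (p ∧ q)] (h : ¬ p) :
    (if p ∧ q then (1:ℚ) else 0) = 0 := if_neg (fun a => h a.1)

theorem iteR {p q : Prop} [Decidable (p ∧ q)] (h : ¬ q) :
    (if p ∧ q then (1:ℚ) else 0) = 0 := if_neg (fun a => h a.2)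

theorem mv_n1 (hn : 4 ≤ n) (hadm : Admissible n ι) (hadap : Adapted n (cartanD n) ι) :
    IsMv ι n (n-1) (n-1) n (n+1) (n+2) (PD ι n (n-1)) (PD ι n (n-1)) where
  coef := by
    intro e m hm he _ s
    have X := fun s i => xsj_eval hadm (j0 := n-1) (by omega) hm s i
    rcases box_cases hn he with rfl | ⟨h1, h2⟩ | rfl | rfl | rfl | rfl | ⟨t, h1, h2, h3⟩
    · rw [box0, X]; simp (disch := omega) only [iteL, iteR, true_and, and_true, sub_zero, zero_sub, add_zero, zero_add, sub_self, neg_zero] <;> split_ifs <;> first | omega | norm_num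
    · rw [box_lo h1 h2, Pi.sub_apply, X, X]; simp (disch := omega) only [iteL, iteR, true_and, and_true, sub_zero, zero_sub, add_zero, zero_add, sub_self, neg_zero] <;> split_ifs <;> first | omega | norm_num
    · rw [box_n1 hn, Pi.sub_apply, Pi.add_apply, X, X, X]; simp (disch := omega) only [iteL, iteR, true_and, and_true, sub_zero, zero_sub, add_zero, zero_add, sub_self, neg_zero] <;> split_ifs <;> first | omega | norm_num
    · rw [box_n hn, Pi.sub_apply, X, X]; simp (disch := omega) only [iteL, iteR, true_and, and_true, sub_zero, zero_sub, add_zero, zero_add, sub_self, neg_zero] <;> split_ifs <;> first | omega | norm_num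
    · rw [box_bn hn, Pi.sub_apply, X, X]; simp (disch := omega) only [iteL, iteR, true_and, and_true, sub_zero, zero_sub, add_zero, zero_add, sub_self, neg_zero] <;> split_ifs <;> first | omega | norm_num
    · rw [box_bn1 hn, Pi.sub_apply, Pi.sub_apply, X, X, X]; simp (disch := omega) only [iteL, iteR, true_and, and_true, sub_zero, zero_sub, add_zero, zero_add, sub_self, neg_zero] <;> split_ifs <;> first | omega | norm_num
    · rw [box_bar hn h1 h2 h3, Pi.sub_apply, X, X]; simp (disch := omega) only [iteL, iteR, true_and, and_true, sub_zero, zero_sub, add_zero, zero_add, sub_self, neg_zero] <;> split_ifs <;> first | omega | norm_num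
  diff₁ := by
    intro s hs
    rw [beta_n1 hn hadm hadap hs, box_n1 hn, box_n hn]; abel
  diff₂ := by
    intro s hs
    rw [beta_n1 hn hadm hadap hs, box_bn hn, box_bn1 hn]; abel

theorem mv_n (hn : 4 ≤ n) (hadm : Admissible n ι) (hadap : Adapted n (cartanD n) ι) :
    IsMv ι n n (n-1) (n+1) n (n+2) (PD ι n n) (PD ι n n) where
  coef := by
    intro e m hm he h0 s
    have X := fun s i => xsj_eval hadm (j0 := n) (by omega) hm s i
    rcases box_cases hn he with rfl | ⟨h1, h2⟩ | rfl | rfl | rfl | rfl | ⟨t, h1, h2, h3⟩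
    · exact absurd rfl (h0 rfl)
    · rw [box_lo h1 h2, Pi.sub_apply, X, X]; simp (disch := omega) only [iteL, iteR, true_and, and_true, sub_zero, zero_sub, add_zero, zero_add, sub_self, neg_zero] <;> split_ifs <;> first | omega | norm_num
    · rw [box_n1 hn, Pi.sub_apply, Pi.add_apply, X, X, X]; simp (disch := omega) only [iteL, iteR, true_and, and_true, sub_zero, zero_sub, add_zero, zero_add, sub_self, neg_zero] <;> split_ifs <;> first | omega | norm_num
    · rw [box_n hn, Pi.sub_apply, X, X]; simp (disch := omega) only [iteL, iteR, true_and, and_true, sub_zero, zero_sub, add_zero, zero_add, sub_self, neg_zero] <;> split_ifs <;> first | omega | norm_num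
    · rw [box_bn hn, Pi.sub_apply, X, X]; simp (disch := omega) only [iteL, iteR, true_and, and_true, sub_zero, zero_sub, add_zero, zero_add, sub_self, neg_zero] <;> split_ifs <;> first | omega | norm_num
    · rw [box_bn1 hn, Pi.sub_apply, Pi.sub_apply, X, X, X]; simp (disch := omega) only [iteL, iteR, true_and, and_true, sub_zero, zero_sub, add_zero, zero_add, sub_self, neg_zero] <;> split_ifs <;> first | omega | norm_num
    · rw [box_bar hn h1 h2 h3, Pi.sub_apply, X, X]; simp (disch := omega) only [iteL, iteR, true_and, and_true, sub_zero, zero_sub, add_zero, zero_add, sub_self, neg_zero] <;> split_ifs <;> first | omega | norm_num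
  diff₁ := by
    intro s hs
    rw [beta_n hn hadm hadap hs, box_n1 hn, box_bn hn]; abel
  diff₂ := by
    intro s hs
    rw [beta_n hn hadm hadap hs, box_n hn, box_bn1 hn]; abel

theorem mv_n2 (hn : 4 ≤ n) (hadm : Admissible n ι) (hadap : Adapted n (cartanD n) ι) :
    IsMv ι n (n-2) (n-2) (n-1) (n+2) (n+3) (PD ι n (n-2)) (PD ι n (n-2) + 1) where
  coef := by
    intro e m hm he _ s
    have X := fun s i => xsj_eval hadm (j0 := n-2) (by omega) hm s i
    rcases box_cases hn he with rfl | ⟨h1, h2⟩ | rfl | rfl | rfl | rfl | ⟨t, h1, h2, h3⟩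
    · rw [box0, X]; simp (disch := omega) only [iteL, iteR, true_and, and_true, sub_zero, zero_sub, add_zero, zero_add, sub_self, neg_zero] <;> split_ifs <;> first | omega | norm_num
    · rw [box_lo h1 h2, Pi.sub_apply, X, X]
      rcases Nat.lt_or_ge (e+2) n with h | h
      · simp (disch := omega) only [iteL, iteR, true_and, and_true, sub_zero, zero_sub, add_zero, zero_add, sub_self, neg_zero] <;> split_ifs <;> first | omega | norm_num
      · obtain rfl : e = n - 2 := by omega
        simp (disch := omega) only [iteL, iteR, true_and, and_true, sub_zero, zero_sub, add_zero, zero_add, sub_self, neg_zero] <;> split_ifs <;> first | omega | norm_num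
    · rw [box_n1 hn, Pi.sub_apply, Pi.add_apply, X, X, X]; simp (disch := omega) only [iteL, iteR, true_and, and_true, sub_zero, zero_sub, add_zero, zero_add, sub_self, neg_zero] <;> split_ifs <;> first | omega | norm_num
    · rw [box_n hn, Pi.sub_apply, X, X]; simp (disch := omega) only [iteL, iteR, true_and, and_true, sub_zero, zero_sub, add_zero, zero_add, sub_self, neg_zero] <;> split_ifs <;> first | omega | norm_num
    · rw [box_bn hn, Pi.sub_apply, X, X]; simp (disch := omega) only [iteL, iteR, true_and, and_true, sub_zero, zero_sub, add_zero, zero_add, sub_self, neg_zero] <;> split_ifs <;> first | omega | norm_num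
    · rw [box_bn1 hn, Pi.sub_apply, Pi.sub_apply, X, X, X]; simp (disch := omega) only [iteL, iteR, true_and, and_true, sub_zero, zero_sub, add_zero, zero_add, sub_self, neg_zero] <;> split_ifs <;> first | omega | norm_num
    · rw [box_bar hn h1 h2 h3, Pi.sub_apply, X, X]
      rcases Nat.lt_or_ge (t+2) n with h | h
      · simp (disch := omega) only [iteL, iteR, true_and, and_true, sub_zero, zero_sub, add_zero, zero_add, sub_self, neg_zero] <;> split_ifs <;> first | omega | norm_num
      · obtain rfl : t = n - 2 := by omega
        simp (disch := omega) only [iteL, iteR, true_and, and_true, sub_zero, zero_sub, add_zero, zero_add, sub_self, neg_zero] <;> split_ifs <;> first | omega | norm_num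
  diff₁ := by
    intro s hs
    rw [beta_n2 hn hadm hadap hs, box_lo (by omega) (by omega), box_n1 hn,
      show n - 2 - 1 = n - 3 by omega]; abel
  diff₂ := by
    intro s hs
    have hb := beta_n2 (s := s + 1) hn hadm hadap (by omega)
    rw [show s + ((PD ι n (n-2) : ℤ) + 1) = s + 1 + PD ι n (n-2) by ring, hb,
      box_bn1 hn, box_bar hn (t := n-2) (by omega) (by omega) (by omega),
      show n - 2 - 1 = n - 3 by omega,
      show s + 1 + (PD ι n (n-2) : ℤ) = s + PD ι n (n-2) + 1 by ring,
      show s + 1 + (PD ι n (n-1) : ℤ) = s + PD ι n (n-1) + 1 by ring,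
      show s + 1 + (PD ι n n : ℤ) = s + PD ι n n + 1 by ring,
      show s + 1 + (PD ι n (n-3) : ℤ) + 1 = s + PD ι n (n-3) + n - (n - 2 : ℕ) by omega,
      show s + (PD ι n (n-2) : ℤ) + 1 + 1 = s + PD ι n (n-2) + n - (n - 2 : ℕ) by omega]
    abel

theorem mv_lo (hn : 4 ≤ n) (hadm : Admissible n ι) (hadap : Adapted n (cartanD n) ι) {j : ℕ}
    (hj1 : 1 ≤ j) (hj2 : j + 3 ≤ n) :
    IsMv ι n j j (j+1) (2*n-j) (2*n+1-j) (PD ι n j) (PD ι n j + (n - j - 1)) where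
  coef := by
    intro e m hm he _ s
    have X := fun s i => xsj_eval hadm (j0 := j) (by omega) hm s i
    rcases box_cases hn he with rfl | ⟨h1, h2⟩ | rfl | rfl | rfl | rfl | ⟨t, h1, h2, h3⟩
    · rw [box0, X]; simp (disch := omega) only [iteL, iteR, true_and, and_true, sub_zero, zero_sub, add_zero, zero_add, sub_self, neg_zero] <;> split_ifs <;> first | omega | norm_num
    · rw [box_lo h1 h2, Pi.sub_apply, X, X]
      by_cases a1 : e = j
      · subst a1; simp (disch := omega) only [iteL, iteR, true_and, and_true, sub_zero, zero_sub, add_zero, zero_add, sub_self, neg_zero] <;> split_ifs <;> first | omega | norm_num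
      · by_cases a2 : e = j + 1
        · subst a2
          simp only [Nat.add_sub_cancel]
          simp (disch := omega) only [iteL, iteR, true_and, and_true, sub_zero, zero_sub, add_zero, zero_add, sub_self, neg_zero] <;> split_ifs <;> first | omega | norm_num
        · simp (disch := omega) only [iteL, iteR, true_and, and_true, sub_zero, zero_sub, add_zero, zero_add, sub_self, neg_zero] <;> split_ifs <;> first | omega | norm_num
    · rw [box_n1 hn, Pi.sub_apply, Pi.add_apply, X, X, X]; simp (disch := omega) only [iteL, iteR, true_and, and_true, sub_zero, zero_sub, add_zero, zero_add, sub_self, neg_zero] <;> split_ifs <;> first | omega | norm_num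
    · rw [box_n hn, Pi.sub_apply, X, X]; simp (disch := omega) only [iteL, iteR, true_and, and_true, sub_zero, zero_sub, add_zero, zero_add, sub_self, neg_zero] <;> split_ifs <;> first | omega | norm_num
    · rw [box_bn hn, Pi.sub_apply, X, X]; simp (disch := omega) only [iteL, iteR, true_and, and_true, sub_zero, zero_sub, add_zero, zero_add, sub_self, neg_zero] <;> split_ifs <;> first | omega | norm_num
    · rw [box_bn1 hn, Pi.sub_apply, Pi.sub_apply, X, X, X]; simp (disch := omega) only [iteL, iteR, true_and, and_true, sub_zero, zero_sub, add_zero, zero_add, sub_self, neg_zero] <;> split_ifs <;> first | omega | norm_num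
    · rw [box_bar hn h1 h2 h3, Pi.sub_apply, X, X]
      by_cases a1 : t = j
      · subst a1; simp (disch := omega) only [iteL, iteR, true_and, and_true, sub_zero, zero_sub, add_zero, zero_add, sub_self, neg_zero] <;> split_ifs <;> first | omega | norm_num
      · by_cases a2 : t = j + 1
        · subst a2
          simp only [Nat.add_sub_cancel]
          simp (disch := omega) only [iteL, iteR, true_and, and_true, sub_zero, zero_sub, add_zero, zero_add, sub_self, neg_zero] <;> split_ifs <;> first | omega | norm_num
        · simp (disch := omega) only [iteL, iteR, true_and, and_true, sub_zero, zero_sub, add_zero, zero_add, sub_self, neg_zero] <;> split_ifs <;> first | omega | norm_num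
  diff₁ := by
    intro s hs
    rw [beta_lo hn hadm hadap hj1 hj2 hs, box_lo (by omega) (by omega),
      box_lo (by omega) (by omega), Nat.add_sub_cancel]; abel
  diff₂ := by
    intro s hs
    have hb := beta_lo (s := s + (n - j - 1)) hn hadm hadap hj1 hj2 (by omega)
    rw [show s + ((PD ι n j : ℤ) + (n - j - 1)) = s + (n - j - 1) + PD ι n j by ring, hb,
      box_bar hn (t := j + 1) (by omega) (by omega) (by omega),
      box_bar hn (t := j) (by omega) (by omega) (by omega),
      Nat.add_sub_cancel,
      show s + (PD ι n j : ℤ) + n - (j + 1 : ℕ) = s + (n - j - 1) + PD ι n j by push_cast; ring,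
      show s + (PD ι n (j+1) : ℤ) + n - (j + 1 : ℕ) = s + (n - j - 1) + PD ι n (j+1) by
        push_cast; ring,
      show s + (PD ι n (j-1) : ℤ) + n - j = s + (n - j - 1) + PD ι n (j-1) + 1 by ring,
      show s + (PD ι n j : ℤ) + n - j = s + (n - j - 1) + PD ι n j + 1 by ring]
    abel

end betas


section cols
variable {n : ℕ} {ι : ℕ → ℕ}

/-- admissible consecutive entries -/
def RR (n x y : ℕ) : Prop := x < y ∨ (x = n + 1 ∧ y = n)

theorem not_leD_iff (n x y : ℕ) : ¬ leD n y x ↔ RR n x y := by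
  unfold leD RR
  omega

/-- `e` sits at position `p` of the column -/
def hit (k : ℕ) (j : ℕ → ℕ) (e : ℕ) (p : ℤ) : Prop := 1 ≤ p ∧ p ≤ k ∧ j p.toNat = e

structure ColOK (n : ℕ) (sp : Prop) (k : ℕ) (j : ℕ → ℕ) : Prop where
  adj : ∀ i, 1 ≤ i → i < k → RR n (j i) (j (i+1))
  gen : ¬ sp → ∀ i, 1 ≤ i → i ≤ k → 1 ≤ j i ∧ j i ≤ 2 * n
  spin : sp → j 1 = 0 ∧ ∀ i, 2 ≤ i → i ≤ k → n + 1 ≤ j i ∧ j i ≤ 2 * n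

open Classical in
/-- signed count for a move -/
noncomputable def DD (k : ℕ) (j : ℕ → ℕ) (e f : ℕ) (a : ℤ) : ℤ :=
  (if hit k j e a then 1 else 0) - (if hit k j f (a+1) then 1 else 0)

theorem DD_cases (k : ℕ) (j : ℕ → ℕ) (e f : ℕ) (a : ℤ) :
    (DD k j e f a = 1 ∧ hit k j e a ∧ ¬ hit k j f (a+1)) ∨
    (DD k j e f a = 0 ∧ (hit k j e a ↔ hit k j f (a+1))) ∨
    (DD k j e f a = -1 ∧ ¬ hit k j e a ∧ hit k j f (a+1)) := by
  unfold DD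
  by_cases h1 : hit k j e a <;> by_cases h2 : hit k j f (a+1) <;> simp [h1, h2]

open Classical in
theorem sum_hit (k : ℕ) (j : ℕ → ℕ) (e : ℕ) (s c m p : ℤ) (hp : p = s + k + c - m) :
    (∑ i ∈ Finset.Icc 1 k, if j i = e ∧ s + k - i + c = m then (1:ℚ) else 0) =
      if hit k j e p then 1 else 0 := by
  split_ifs with h
  · obtain ⟨h1, h2, h3⟩ := h
    rw [Finset.sum_eq_single p.toNat, if_pos ⟨h3, by omega⟩]
    · intro b _ hb
      rw [if_neg]
      rintro ⟨_, h⟩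
      omega
    · intro h
      simp only [Finset.mem_Icc] at h
      omega
  · apply Finset.sum_eq_zero
    intro i hi
    simp only [Finset.mem_Icc] at hi
    rw [if_neg]
    rintro ⟨h1, h2⟩
    apply h
    have : p = i := by omega
    subst this
    exact ⟨by omega, by omega, by simpa using h1⟩

theorem tab_coef {j0 e₁ f₁ e₂ f₂ : ℕ} {c₁ c₂ : ℤ} (mv : IsMv ι n j0 e₁ f₁ e₂ f₂ c₁ c₂)
    {k m : ℕ} {j : ℕ → ℕ} (hm : 1 ≤ m)
    (hj : ∀ i, 1 ≤ i → i ≤ k → j i ≤ 2 * n ∧ (j i = 0 → j0 ≠ n)) (s : ℤ) :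
    tab (boxD ι n) s k j (occPos ι j0 m) =
      ((DD k j e₁ f₁ (s + k + c₁ - m) + DD k j e₂ f₂ (s + k + c₂ - m) : ℤ) : ℚ) := by
  unfold tab
  rw [Finset.sum_apply]
  have : ∀ i ∈ Finset.Icc 1 k, boxD ι n (s + k - i) (j i) (occPos ι j0 m) = _ := fun i hi =>
    mv.coef (j i) m hm (hj i (Finset.mem_Icc.1 hi).1 (Finset.mem_Icc.1 hi).2).1
      (hj i (Finset.mem_Icc.1 hi).1 (Finset.mem_Icc.1 hi).2).2 (s + k - i)
  rw [Finset.sum_congr rfl this]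
  simp only [Finset.sum_add_distrib, Finset.sum_sub_distrib, add_assoc _ _ (1:ℤ)]
  rw [sum_hit k j e₁ s c₁ m _ rfl, sum_hit k j e₂ s c₂ m _ rfl,
    sum_hit k j f₁ s (c₁ + 1) m (s + k + c₁ - m + 1) (by ring),
    sum_hit k j f₂ s (c₂ + 1) m (s + k + c₂ - m + 1) (by ring)]
  unfold DD
  push_cast
  rfl

theorem tab_update (box : ℤ → ℕ → ℕ → ℚ) (s : ℤ) (k : ℕ) (j : ℕ → ℕ) (a f : ℕ)
    (h1 : 1 ≤ a) (h2 : a ≤ k) :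
    tab box s k (Function.update j a f) =
      tab box s k j - (box (s + k - a) (j a) - box (s + k - a) f) := by
  rw [eq_sub_iff_add_eq, ← eq_sub_iff_add_eq']
  unfold tab
  rw [← Finset.sum_sub_distrib, Finset.sum_eq_single a]
  · simp
  · intro b _ hb
    rw [Function.update_of_ne hb]; simp
  · intro h
    exact absurd (Finset.mem_Icc.2 ⟨h1, h2⟩) h

theorem ColOK.update {sp : Prop} {k : ℕ} {j : ℕ → ℕ} (h : ColOK n sp k j) {a f : ℕ}
    (h1 : 1 ≤ a) (h2 : a ≤ k) (h0 : j a ≠ 0) (hf : 1 ≤ f ∧ f ≤ 2 * n)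
    (hsp : sp → n + 1 ≤ j a → n + 1 ≤ f)
    (hp : 2 ≤ a → RR n (j (a-1)) f) (hq : a < k → RR n f (j (a+1))) :
    ColOK n sp k (Function.update j a f) where
  adj := by
    intro i hi hik
    by_cases e1 : i = a
    · subst e1
      rw [Function.update_self, Function.update_of_ne (by omega)]
      exact hq hik
    · by_cases e2 : i + 1 = a
      · subst e2
        rw [Function.update_self, Function.update_of_ne (by omega)]
        exact hp (by omega)
      · rw [Function.update_of_ne e1, Function.update_of_ne e2]
        exact h.adj i hi hik
  gen := by
    intro hs i hi hik
    by_cases e1 : i = a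
    · subst e1
      rw [Function.update_self]
      exact hf
    · rw [Function.update_of_ne e1]
      exact h.gen hs i hi hik
  spin := by
    intro hs
    obtain ⟨g1, g2⟩ := h.spin hs
    have ha : a ≠ 1 := by rintro rfl; exact h0 g1
    refine ⟨by rw [Function.update_of_ne (by omega)]; exact g1, ?_⟩
    intro i hi hik
    by_cases e1 : i = a
    · subst e1
      rw [Function.update_self]
      exact ⟨hsp hs (g2 i hi hik).1, hf.2⟩
    · rw [Function.update_of_ne e1]
      exact g2 i hi hik

theorem hit_update {k : ℕ} {j : ℕ → ℕ} {a : ℤ} {x y z : ℕ} (h : hit k j x a) (hx : x ≠ z)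
    (hy : y ≠ z) (p : ℤ) :
    hit k (Function.update j a.toNat y) z p ↔ hit k j z p := by
  unfold hit
  by_cases hp : p.toNat = a.toNat
  · rw [hp, Function.update_self, h.2.2]
    tauto
  · rw [Function.update_of_ne hp]

theorem up {j0 e f : ℕ} {c : ℤ}
    (diff : ∀ s : ℤ, 1 ≤ s + c → boxD ι n s e - boxD ι n s f =
      beta (cartanD n) ι (occPos ι j0 (s + c).toNat))
    {sp : Prop} {k m : ℕ} {j : ℕ → ℕ} {s : ℤ} (hc : ColOK n sp k j) (hm : 1 ≤ m)
    (he : 1 ≤ e) (hf : 1 ≤ f ∧ f ≤ 2 * n)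
    (hsp : sp → n + 1 ≤ e → n + 1 ≤ f)
    (hD : hit k j e (s + k + c - m)) (hD' : ¬ hit k j f (s + k + c - m + 1))
    (hprev : ∀ x, RR n x e → RR n x f)
    (hnext : ∀ y, hit k j y (s + k + c - m + 1) → RR n e y → y ≠ f → RR n f y) :
    ColOK n sp k (Function.update j (s + k + c - m).toNat f) ∧
    tab (boxD ι n) s k (Function.update j (s + k + c - m).toNat f) =
      tab (boxD ι n) s k j - beta (cartanD n) ι (occPos ι j0 m) := by
  obtain ⟨h1, h2, h3⟩ := hD
  generalize ha : s + k + c - m = a at *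
  obtain ⟨b, rfl⟩ : ∃ b : ℕ, a = b := ⟨a.toNat, by omega⟩
  rw [Int.toNat_natCast] at h3 ⊢
  constructor
  · apply hc.update (by omega) (by omega) (by omega) hf (by rw [h3]; exact hsp)
    · intro hb
      apply hprev
      have := hc.adj (b-1) (by omega) (by omega)
      rwa [show b - 1 + 1 = b by omega, h3] at this
    · intro hb
      have hh : hit k j (j (b+1)) ((b:ℤ)+1) :=
        ⟨by omega, by omega, by rw [show ((b:ℤ)+1).toNat = b + 1 by omega]⟩
      apply hnext _ hh
      · have := hc.adj b (by omega) hb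
        rwa [h3] at this
      · intro h
        exact hD' (h ▸ hh)
  · rw [tab_update _ _ _ _ _ _ (by omega) (by omega), h3, diff _ (by omega)]
    congr 4
    omega

theorem down {j0 e f : ℕ} {c : ℤ}
    (diff : ∀ s : ℤ, 1 ≤ s + c → boxD ι n s e - boxD ι n s f =
      beta (cartanD n) ι (occPos ι j0 (s + c).toNat))
    {sp : Prop} {k m : ℕ} {j : ℕ → ℕ} {s : ℤ} (hc : ColOK n sp k j) (hm : 1 ≤ m)
    (hf : 1 ≤ f) (he : 1 ≤ e ∧ e ≤ 2 * n)
    (hsp : sp → n + 1 ≤ f → n + 1 ≤ e)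
    (hD : hit k j f (s + k + c - (m + 1 : ℕ) + 1)) (hD' : ¬ hit k j e (s + k + c - (m + 1 : ℕ)))
    (hprev : ∀ x, hit k j x (s + k + c - (m + 1 : ℕ)) → RR n x f → x ≠ e → RR n x e)
    (hnext : ∀ y, RR n f y → RR n e y) :
    ColOK n sp k (Function.update j (s + k + c - (m + 1 : ℕ) + 1).toNat e) ∧
    tab (boxD ι n) s k (Function.update j (s + k + c - (m + 1 : ℕ) + 1).toNat e) =
      tab (boxD ι n) s k j + beta (cartanD n) ι (occPos ι j0 m) := by
  obtain ⟨h1, h2, h3⟩ := hD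
  generalize ha : s + k + c - (m + 1 : ℕ) = a at *
  obtain ⟨b, rfl⟩ : ∃ b : ℕ, a = b := ⟨a.toNat, by omega⟩
  rw [show ((b:ℤ)+1).toNat = b + 1 by omega] at *
  constructor
  · apply hc.update (by omega) (by omega) (by omega) he (by rw [h3]; exact hsp)
    · intro hb
      have hh : hit k j (j b) (b:ℤ) := ⟨by omega, by omega, by simp⟩
      apply hprev _ hh
      · have := hc.adj b (by omega) (by omega)
        rwa [h3] at this
      · intro h
        exact hD' (h ▸ hh)
    · intro hb
      apply hnext
      have := hc.adj (b+1) (by omega) (by omega)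
      rwa [h3] at this
  · rw [tab_update _ _ _ _ _ _ (by omega) (by omega), h3, ← neg_sub (boxD ι n _ e), diff _ (by omega),
      sub_neg_eq_add]
    congr 4
    omega

theorem hit_unique {k : ℕ} {j : ℕ → ℕ} {x y : ℕ} {p : ℤ} (h : hit k j x p) (h' : hit k j y p) :
    x = y := h.2.2.symm.trans h'.2.2

/-- combinatorial properties of the two moves -/
structure Comb (n e₁ f₁ e₂ f₂ : ℕ) (c₁ c₂ : ℤ) (sp : Prop) : Prop where
  rng : (1 ≤ e₁ ∧ e₁ ≤ 2*n) ∧ (1 ≤ f₁ ∧ f₁ ≤ 2*n) ∧ (1 ≤ e₂ ∧ e₂ ≤ 2*n) ∧ (1 ≤ f₂ ∧ f₂ ≤ 2*n)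
  ne : e₁ ≠ e₂ ∧ e₁ ≠ f₂ ∧ f₁ ≠ e₂ ∧ f₁ ≠ f₂ ∧ e₁ ≠ f₁ ∧ e₂ ≠ f₂
  sp₁ : sp → (n + 1 ≤ e₁ ↔ n + 1 ≤ f₁)
  sp₂ : sp → (n + 1 ≤ e₂ ↔ n + 1 ≤ f₂)
  up₁p : ∀ x, RR n x e₁ → RR n x f₁
  up₁n : ∀ y, RR n e₁ y → y ≠ f₁ → RR n f₁ y
  up₂p : ∀ x, RR n x e₂ → RR n x f₂
  up₂n : ∀ y, RR n e₂ y → y ≠ f₂ → (y ≠ f₁ ∨ c₁ ≠ c₂) → RR n f₂ y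
  dn₁n : ∀ y, RR n f₁ y → RR n e₁ y
  dn₁p : ∀ x, RR n x f₁ → x ≠ e₁ → (x ≠ e₂ ∨ c₁ ≠ c₂) → RR n x e₁
  dn₂n : ∀ y, RR n f₂ y → RR n e₂ y
  dn₂p : ∀ x, RR n x f₂ → x ≠ e₂ → RR n x e₂

theorem ColOK.le {sp : Prop} {k : ℕ} {j : ℕ → ℕ} (h : ColOK n sp k j) (i : ℕ) (h1 : 1 ≤ i)
    (h2 : i ≤ k) : j i ≤ 2 * n ∧ (j i = 0 → sp) := by
  by_cases hs : sp
  · refine ⟨?_, fun _ => hs⟩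
    by_cases hi : i = 1
    · subst hi; rw [(h.spin hs).1]; omega
    · exact ((h.spin hs).2 i (by omega) h2).2
  · have := h.gen hs i h1 h2
    exact ⟨this.2, by omega⟩

theorem step (hadm : Admissible n ι) {j0 e₁ f₁ e₂ f₂ : ℕ} {c₁ c₂ : ℤ} {sp : Prop}
    (hj0 : 1 ≤ j0 ∧ j0 ≤ n) (hs : sp → j0 ≠ n)
    (mv : IsMv ι n j0 e₁ f₁ e₂ f₂ c₁ c₂) (cb : Comb n e₁ f₁ e₂ f₂ c₁ c₂ sp)
    {k m : ℕ} {j : ℕ → ℕ} {s : ℤ} (hc : ColOK n sp k j) (hm : 1 ≤ m) :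
    ∃ j', ColOK n sp k j' ∧
      Ssj (cartanD n) ι m j0 (tab (boxD ι n) s k j) = tab (boxD ι n) s k j' := by
  have hcoef := tab_coef mv hm (fun i h1 h2 =>
    ⟨(hc.le i h1 h2).1, fun h => hs ((hc.le i h1 h2).2 h)⟩) s
  obtain ⟨n1, n2, n3, n4, n5, n6⟩ := cb.ne
  obtain ⟨r1, r2, r3, r4⟩ := cb.rng
  obtain ⟨m, rfl⟩ : ∃ m', m = m' + 1 := ⟨m - 1, by omega⟩
  unfold Ssj Sop
  rw [hcoef, kminus_occ hadm hj0.1 hj0.2]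
  have d1 := DD_cases k j e₁ f₁ (s + k + c₁ - (m+1:ℕ))
  have d2 := DD_cases k j e₂ f₂ (s + k + c₂ - (m+1:ℕ))
  rcases d1 with ⟨q1, d1, d1'⟩ | ⟨q1, d1⟩ | ⟨q1, d1, d1'⟩ <;>
    rcases d2 with ⟨q2, d2, d2'⟩ | ⟨q2, d2⟩ | ⟨q2, d2, d2'⟩ <;> rw [q1, q2]
  · -- (1,1)
    rw [if_pos (by norm_num)]
    have hcc : c₁ ≠ c₂ := by
      rintro rfl
      exact n1 (hit_unique d1 d2)
    obtain ⟨g1, g2⟩ := up mv.diff₁ hc hm r1.1 r2 (fun h => (cb.sp₁ h).1) d1 d1' cb.up₁p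
      (fun y _ => cb.up₁n y)
    obtain ⟨g3, g4⟩ := up mv.diff₂ g1 hm r3.1 r4 (fun h => (cb.sp₂ h).1)
      ((hit_update d1 n1 n3 _).2 d2) (by rwa [hit_update d1 n2 n4]) cb.up₂p
      (fun y _ h h' => cb.up₂n y h h' (Or.inr hcc))
    refine ⟨_, g3, ?_⟩
    rw [g4, g2]
    push_cast
    rw [two_smul]
    abel
  · -- (1,0)
    rw [if_pos (by norm_num)]
    obtain ⟨g1, g2⟩ := up mv.diff₁ hc hm r1.1 r2 (fun h => (cb.sp₁ h).1) d1 d1' cb.up₁p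
      (fun y _ => cb.up₁n y)
    refine ⟨_, g1, ?_⟩
    rw [g2]; simp
  · exact ⟨j, hc, by simp⟩
  · -- (0,1)
    rw [if_pos (by norm_num)]
    obtain ⟨g1, g2⟩ := up mv.diff₂ hc hm r3.1 r4 (fun h => (cb.sp₂ h).1) d2 d2' cb.up₂p
      (fun y hy h h' => cb.up₂n y h h' (by
        by_contra hcon
        push Not at hcon
        obtain ⟨rfl, rfl⟩ := hcon
        exact n1 (hit_unique (d1.2 hy) d2)))
    refine ⟨_, g1, ?_⟩
    rw [g2]; simp
  · exact ⟨j, hc, by simp⟩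
  · -- (0,-1)
    rw [if_neg (by norm_num)]
    rcases Nat.eq_zero_or_pos m with rfl | hm'
    · exact ⟨j, hc, by simp [occPos, beta]⟩
    obtain ⟨g1, g2⟩ := down mv.diff₂ hc hm' r4.1 r3 (fun h => (cb.sp₂ h).2) d2' d2
      (fun x _ => cb.dn₂p x) cb.dn₂n
    refine ⟨_, g1, ?_⟩
    rw [g2]; simp
  · exact ⟨j, hc, by simp⟩
  · -- (-1,0)
    rw [if_neg (by norm_num)]
    rcases Nat.eq_zero_or_pos m with rfl | hm'
    · exact ⟨j, hc, by simp [occPos, beta]⟩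
    obtain ⟨g1, g2⟩ := down mv.diff₁ hc hm' r2.1 r1 (fun h => (cb.sp₁ h).2) d1' d1
      (fun x hx h h' => cb.dn₁p x h h' (by
        by_contra hcon
        push Not at hcon
        obtain ⟨rfl, rfl⟩ := hcon
        exact n4 (hit_unique d1' (d2.1 hx)))) cb.dn₁n
    refine ⟨_, g1, ?_⟩
    rw [g2]; simp
  · -- (-1,-1)
    rw [if_neg (by norm_num)]
    rcases Nat.eq_zero_or_pos m with rfl | hm'
    · exact ⟨j, hc, by simp [occPos, beta]⟩
    have hcc : c₁ ≠ c₂ := by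
      rintro rfl
      exact n4 (hit_unique d1' d2')
    obtain ⟨g1, g2⟩ := down mv.diff₁ hc hm' r2.1 r1 (fun h => (cb.sp₁ h).2) d1' d1
      (fun x hx h h' => cb.dn₁p x h h' (Or.inr hcc)) cb.dn₁n
    obtain ⟨g3, g4⟩ := down mv.diff₂ g1 hm' r4.1 r3 (fun h => (cb.sp₂ h).2)
      ((hit_update d1' n4 n2 _).2 d2') (by rwa [hit_update d1' n3 n1])
      (fun x _ => cb.dn₂p x) cb.dn₂n
    refine ⟨_, g3, ?_⟩
    rw [g4, g2]
    push_cast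
    rw [neg_smul, two_smul]
    abel

end cols


section fin
variable {n : ℕ} {ι : ℕ → ℕ}

theorem comb_lo {j : ℕ} (hj1 : 1 ≤ j) (hj2 : j + 3 ≤ n) (c₁ c₂ : ℤ) (sp : Prop) :
    Comb n j (j+1) (2*n-j) (2*n+1-j) c₁ c₂ sp := by
  constructor <;> (try unfold RR) <;> intros <;> omega

theorem comb_n2 (hn : 4 ≤ n) (c₁ c₂ : ℤ) (sp : Prop) :
    Comb n (n-2) (n-1) (n+2) (n+3) c₁ c₂ sp := by
  constructor <;> (try unfold RR) <;> intros <;> omega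

theorem comb_n1 (hn : 4 ≤ n) (c : ℤ) (sp : Prop) :
    Comb n (n-1) n (n+1) (n+2) c c sp := by
  constructor <;> (try unfold RR) <;> intros <;> omega

theorem comb_n (hn : 4 ≤ n) (c : ℤ) {sp : Prop} (h : ¬ sp) :
    Comb n (n-1) (n+1) n (n+2) c c sp := by
  constructor <;> (try unfold RR) <;> intros <;> first | omega | (exact absurd ‹sp› h)

/-- all moves not involving the spin box -/
theorem step_all (hn : 4 ≤ n) (hadm : Admissible n ι) (hadap : Adapted n (cartanD n) ι)
    {j0 : ℕ} {sp : Prop} (hj0 : 1 ≤ j0 ∧ j0 ≤ n) (hs : sp → j0 ≠ n)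
    {k m : ℕ} {j : ℕ → ℕ} (s : ℤ) (hc : ColOK n sp k j) (hm : 1 ≤ m) :
    ∃ j', ColOK n sp k j' ∧
      Ssj (cartanD n) ι m j0 (tab (boxD ι n) s k j) = tab (boxD ι n) s k j' := by
  by_cases h1 : j0 + 3 ≤ n
  · exact step hadm hj0 hs (mv_lo hn hadm hadap hj0.1 h1) (comb_lo hj0.1 h1 _ _ _) hc hm
  by_cases h2 : j0 = n - 2
  · subst h2
    exact step hadm hj0 hs (mv_n2 hn hadm hadap) (comb_n2 hn _ _ _) hc hm
  by_cases h3 : j0 = n - 1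
  · subst h3
    exact step hadm hj0 hs (mv_n1 hn hadm hadap) (comb_n1 hn _ _) hc hm
  have h4 : j0 = n := by omega
  subst h4
  exact step hadm hj0 hs (mv_n hn hadm hadap) (comb_n hn _ (fun h => hs h rfl)) hc hm

theorem tab_cons (box : ℤ → ℕ → ℕ → ℚ) (s : ℤ) (k : ℕ) (j : ℕ → ℕ) :
    tab box s (k+1) j = box (s + k) (j 1) + tab box s k (fun i => j (i+1)) := by
  unfold tab
  induction k with
  | zero => simp
  | succ k ih =>
    have e : ∀ (K : ℕ) (f : ℕ → ℕ → ℚ), ∑ i ∈ Finset.Icc 1 K, f i =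
        ∑ i ∈ Finset.range K, f (i+1) := by
      intro K f
      rw [Finset.range_eq_Ico, Finset.sum_Ico_add' f 0 K 1]
      rfl
    rw [e, e, Finset.sum_range_succ', add_comm]
    congr 1
    · push_cast
      congr 1
      ring
    · apply Finset.sum_congr rfl
      intro i _
      push_cast
      congr 1
      ring

theorem tab_congr (box : ℤ → ℕ → ℕ → ℚ) (s : ℤ) (k : ℕ) {j j' : ℕ → ℕ}
    (h : ∀ i, 1 ≤ i → i ≤ k → j i = j' i) : tab box s k j = tab box s k j' := by
  unfold tab
  apply Finset.sum_congr rfl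
  intro i hi
  rw [h i (Finset.mem_Icc.1 hi).1 (Finset.mem_Icc.1 hi).2]

theorem tab_zero (hn : 4 ≤ n) (hadm : Admissible n ι) (hadap : Adapted n (cartanD n) ι)
    {m k : ℕ} {j : ℕ → ℕ} (s : ℤ) (hm : 1 ≤ m)
    (h : ∀ i, 1 ≤ i → i ≤ k → n + 3 ≤ j i ∧ j i ≤ 2 * n) :
    tab (boxD ι n) s k j (occPos ι n m) = 0 := by
  unfold tab
  rw [Finset.sum_apply]
  apply Finset.sum_eq_zero
  intro i hi
  have := h i (Finset.mem_Icc.1 hi).1 (Finset.mem_Icc.1 hi).2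
  rw [(mv_n hn hadm hadap).coef (j i) m hm this.2 (by omega), iteL (by omega), iteL (by omega),
    iteL (by omega), iteL (by omega)]
  norm_num

theorem triple (hn : 4 ≤ n) (hadm : Admissible n ι) (hadap : Adapted n (cartanD n) ι)
    (r : ℤ) (hr : 1 ≤ r + PD ι n n) :
    boxD ι n (r+2) 0 + (boxD ι n (r+1) (n+1) + boxD ι n r (n+2)) =
      boxD ι n r 0 - beta (cartanD n) ι (occPos ι n (r + PD ι n n).toNat) := by
  rw [beta_n hn hadm hadap hr, box0, box0, box_bn hn, box_bn1 hn,
    show r + 1 + (PD ι n n : ℤ) + 1 = r + 2 + PD ι n n by ring,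
    show r + 1 + (PD ι n (n-1) : ℤ) = r + PD ι n (n-1) + 1 by ring]
  abel

theorem mono_col {k : ℕ} {j : ℕ → ℕ} (h : ∀ i, 2 ≤ i → i < k → j i < j (i + 1)) (a : ℕ)
    (ha : 2 ≤ a) (d : ℕ) (hd : a + d ≤ k) : j a + d ≤ j (a + d) := by
  induction d with
  | zero => simp
  | succ d ih =>
    have := ih (by omega)
    have := h (a + d) (by omega) (by omega)
    rw [← add_assoc a d 1]
    omega

theorem spin_n (hn : 4 ≤ n) (hadm : Admissible n ι) (hadap : Adapted n (cartanD n) ι)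
    {k m : ℕ} {j : ℕ → ℕ} (s : ℤ) (hm : 1 ≤ m) (h0 : j 1 = 0) (hk : 1 ≤ k) (hk' : k ≤ n + 1)
    (hr : ∀ i, 2 ≤ i → i ≤ k → n + 1 ≤ j i ∧ j i ≤ 2 * n)
    (hi : ∀ i, 2 ≤ i → i < k → j i < j (i + 1)) :
    ∃ k' j', j' 1 = 0 ∧ 1 ≤ k' ∧ k' ≤ n + 1 ∧
      (∀ i, 2 ≤ i → i ≤ k' → n + 1 ≤ j' i ∧ j' i ≤ 2 * n) ∧
      (∀ i, 2 ≤ i → i < k' → j' i < j' (i + 1)) ∧ k' % 2 = k % 2 ∧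
      Ssj (cartanD n) ι m n (tab (boxD ι n) s k j) = tab (boxD ι n) s k' j' := by
  have X := fun s i => xsj_eval hadm (j0 := n) (by omega) hm s i
  have stay : tab (boxD ι n) s k j (occPos ι n m) = 0 →
      ∃ k' j', j' 1 = 0 ∧ 1 ≤ k' ∧ k' ≤ n + 1 ∧
      (∀ i, 2 ≤ i → i ≤ k' → n + 1 ≤ j' i ∧ j' i ≤ 2 * n) ∧
      (∀ i, 2 ≤ i → i < k' → j' i < j' (i + 1)) ∧ k' % 2 = k % 2 ∧
      Ssj (cartanD n) ι m n (tab (boxD ι n) s k j) = tab (boxD ι n) s k' j' := by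
    intro h
    refine ⟨k, j, h0, hk, hk', hr, hi, rfl, ?_⟩
    unfold Ssj Sop
    rw [h]
    simp
  obtain ⟨K, rfl⟩ : ∃ K, k = K + 1 := ⟨k - 1, by omega⟩
  have e1 := tab_cons (boxD ι n) s K j
  rw [h0] at e1
  have lowb : ∀ i a, 2 ≤ a → a ≤ i → i ≤ K + 1 → j a + (i - a) ≤ j i := by
    intro i a ha hai hik
    have := mono_col hi a ha (i - a) (by omega)
    rwa [show a + (i - a) = i by omega] at this
  by_cases hA : K = 0 ∨ n + 3 ≤ j 2
  · have hb : ∀ i, 2 ≤ i → i ≤ K + 1 → n + 3 ≤ j i ∧ j i ≤ 2 * n := by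
      intro i h2 hik
      have := lowb i 2 le_rfl h2 hik
      exact ⟨by omega, (hr i h2 hik).2⟩
    have hz := tab_zero hn hadm hadap (k := K) (j := fun i => j (i+1)) s hm
      (fun i h1 h2 => hb (i+1) (by omega) (by omega))
    have hco : tab (boxD ι n) s (K+1) j (occPos ι n m) =
        if s + K + PD ι n n = m then 1 else 0 := by
      rw [e1, Pi.add_apply, hz, box0, X]
      simp
    by_cases hmm : s + K + PD ι n n = m
    · rw [if_pos hmm] at hco
      have hK : K + 2 ≤ n := by
        rcases Nat.eq_zero_or_pos K with h | h
        · omega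
        · have := lowb (K+1) 2 le_rfl (by omega) le_rfl
          have := hb 2 le_rfl (by omega)
          have := hb (K+1) (by omega) le_rfl
          omega
      refine ⟨K + 3, fun i => if i = 1 then 0 else if i = 2 then n + 1 else
        if i = 3 then n + 2 else j (i - 2), by simp, by omega, by omega, ?_, ?_, by omega, ?_⟩
      · intro i h1 h2
        by_cases a2 : i = 2
        · subst a2; simp; omega
        by_cases a3 : i = 3
        · subst a3; simp; omega
        have := hb (i-2) (by omega) (by omega)
        simp only [if_neg a2, if_neg a3, if_neg (show i ≠ 1 by omega)]
        omega
      · intro i h1 h2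
        by_cases a2 : i = 2
        · subst a2; simp
        by_cases a3 : i = 3
        · subst a3
          have := hb 2 (by omega) (by omega)
          simp; omega
        have := hi (i-2) (by omega) (by omega)
        rw [show i - 2 + 1 = i + 1 - 2 by omega] at this
        simp only [if_neg a2, if_neg a3, if_neg (show i ≠ 1 by omega),
          if_neg (show i + 1 ≠ 1 by omega), if_neg (show i + 1 ≠ 2 by omega),
          if_neg (show i + 1 ≠ 3 by omega)]
        exact this
      · unfold Ssj Sop
        rw [hco, if_pos (by norm_num), one_smul, e1, tab_cons, tab_cons, tab_cons]
        have tr := triple hn hadm hadap (s + K) (by omega)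
        rw [show (s + K + PD ι n n).toNat = m by omega] at tr
        have ec : tab (boxD ι n) s K (fun i => j (i+1)) = tab (boxD ι n) s K (fun i =>
            if i + 1 + 1 + 1 = 1 then 0 else if i + 1 + 1 + 1 = 2 then n + 1 else
            if i + 1 + 1 + 1 = 3 then n + 2 else j (i + 1 + 1 + 1 - 2)) := by
          apply tab_congr
          intro i h1 h2
          rw [if_neg (by omega), if_neg (by omega), if_neg (by omega)]
          congr 1
        rw [← ec]
        simp only [if_true, show (1 + 1 : ℕ) ≠ 1 by omega, if_false, show (1 + 1 : ℕ) = 2 by rfl,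
          show (1 + 1 + 1 : ℕ) ≠ 1 by omega, show (2 + 1 : ℕ) = 3 by rfl,
          show (3 : ℕ) ≠ 1 by omega, show (3 : ℕ) ≠ 2 by omega, show (2 : ℕ) ≠ 1 by omega]
        rw [show s + ((K + 2 : ℕ) : ℤ) = s + K + 2 by push_cast; ring,
          show s + ((K + 1 : ℕ) : ℤ) = s + K + 1 by push_cast; ring, ← add_assoc, ← add_assoc,
          add_assoc (boxD ι n (s + K + 2) 0), tr]
        abel
    · rw [if_neg hmm] at hco
      exact stay hco
  · push Not at hA
    obtain ⟨L, rfl⟩ : ∃ L, K = L + 1 := ⟨K - 1, by omega⟩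
    have hj2 := hr 2 le_rfl (by omega)
    rw [tab_cons (boxD ι n) s L (fun i => j (i+1))] at e1
    simp only [Nat.reduceAdd] at e1
    by_cases hB : j 2 = n + 1 ∧ 1 ≤ L ∧ j 3 = n + 2
    · obtain ⟨b1, b2, b3⟩ := hB
      obtain ⟨M, rfl⟩ : ∃ M, L = M + 1 := ⟨L - 1, by omega⟩
      rw [tab_cons (boxD ι n) s M (fun i => j (i+1+1))] at e1
      simp only [Nat.reduceAdd] at e1
      rw [b1, b3] at e1
      have hb : ∀ i, 4 ≤ i → i ≤ M + 3 → n + 3 ≤ j i ∧ j i ≤ 2 * n := by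
        intro i h2 hik
        have := lowb i 3 (by omega) (by omega) hik
        exact ⟨by omega, (hr i (by omega) hik).2⟩
      have hz := tab_zero hn hadm hadap (k := M) (j := fun i => j (i+1+1+1)) s hm
        (fun i h1 h2 => hb (i+1+1+1) (by omega) (by omega))
      have hco : tab (boxD ι n) s (M+1+1+1) j (occPos ι n m) =
          if s + M + PD ι n n + 1 = m then -1 else 0 := by
        rw [e1, Pi.add_apply, Pi.add_apply, Pi.add_apply, hz, box0, box_bn hn, box_bn1 hn]
        simp only [Pi.sub_apply, X]
        rw [iteR (q := n - 1 = n) (by omega), iteR (q := n - 1 = n) (by omega),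
          iteR (q := n - 2 = n) (by omega)]
        simp only [and_true]
        push_cast
        split_ifs <;> first | omega | (norm_num; done) | (exfalso; omega)
      by_cases hmm : s + M + PD ι n n + 1 = m
      · rw [if_pos hmm] at hco
        by_cases m1 : m = 1
        · refine ⟨_, j, h0, hk, hk', hr, hi, rfl, ?_⟩
          unfold Ssj Sop
          obtain rfl := m1
          rw [hco, if_neg (by norm_num), show (1:ℕ) = 0 + 1 by rfl,
            kminus_occ hadm (by omega) (by omega)]
          simp [occPos, beta]
        obtain ⟨q, rfl⟩ : ∃ q, m = q + 1 := ⟨m - 1, by omega⟩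
        refine ⟨M + 1, fun i => if i = 1 then 0 else j (i + 2), by simp, by omega, by omega, ?_,
          ?_, by omega, ?_⟩
        · intro i h1 h2
          beta_reduce
          rw [if_neg (by omega)]
          exact hr (i+2) (by omega) (by omega)
        · intro i h1 h2
          beta_reduce
          rw [if_neg (by omega), if_neg (by omega), show i + 1 + 2 = i + 2 + 1 by ring]
          exact hi (i+2) (by omega) (by omega)
        · unfold Ssj Sop
          rw [hco, if_neg (by norm_num), kminus_occ hadm (by omega) (by omega), e1, tab_cons]
          have tr := triple hn hadm hadap (s + M) (by omega)
          rw [show (s + M + PD ι n n).toNat = q by omega] at tr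
          have ec : tab (boxD ι n) s M (fun i => j (i+1+1+1)) = tab (boxD ι n) s M (fun i =>
              if i + 1 = 1 then 0 else j (i + 1 + 2)) := by
            apply tab_congr
            intro i h1 h2
            rw [if_neg (by omega)]
          rw [← ec, if_pos rfl]
          rw [show s + ((M + 1 + 1 : ℕ) : ℤ) = s + M + 2 by push_cast; ring,
            show s + ((M + 1 : ℕ) : ℤ) = s + M + 1 by push_cast; ring, ← add_assoc, ← add_assoc,
            add_assoc (boxD ι n (s + M + 2) 0), tr, neg_one_smul]
          abel
      · rw [if_neg hmm] at hco
        exact stay hco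
    · have hb : ∀ i, 3 ≤ i → i ≤ L + 2 → n + 3 ≤ j i ∧ j i ≤ 2 * n := by
        intro i h2 hik
        have := lowb i 3 (by omega) (by omega) hik
        have h3 := hi 2 le_rfl (by omega)
        simp only [show (2 + 1 : ℕ) = 3 by rfl] at h3
        exact ⟨by omega, (hr i (by omega) hik).2⟩
      have hz := tab_zero hn hadm hadap (k := L) (j := fun i => j (i+1+1)) s hm
        (fun i h1 h2 => hb (i+1+1) (by omega) (by omega))
      apply stay
      rw [e1, Pi.add_apply, Pi.add_apply, hz, box0]
      have : j 2 = n + 1 ∨ j 2 = n + 2 := by omega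
      rcases this with h | h <;> rw [h]
      · rw [box_bn hn]
        simp only [Pi.sub_apply, X]
        rw [iteR (q := n - 1 = n) (by omega)]
        simp only [and_true]
        push_cast
        split_ifs <;> first | omega | (norm_num; done) | (exfalso; omega)
      · rw [box_bn1 hn]
        simp only [Pi.sub_apply, X]
        rw [iteR (q := n - 1 = n) (by omega), iteR (q := n - 2 = n) (by omega)]
        simp only [and_true]
        push_cast
        split_ifs <;> first | omega | (norm_num; done) | (exfalso; omega)

end fin

theorem main (n : ℕ) (hn : 4 ≤ n) (ι : ℕ → ℕ)
    (hadm : Admissible n ι) (hadap : Adapted n (cartanD n) ι) :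
    ∀ T ∈ TabD ι n, ∀ m j, 1 ≤ m → 1 ≤ j → j ≤ n →
      Ssj (cartanD n) ι m j T ∈ TabD ι n := by
  rintro T ⟨k, s, j, hc, rfl⟩ m j0 hm h1 h2
  rcases hc with ⟨k1, k2, g1, g2, g3⟩ | ⟨k0, k1, k2, g1, g2, g3⟩
  · have hcol : ColOK n False k j :=
      ⟨fun i hi hi' => (not_leD_iff _ _ _).1 (g2 i hi hi'), fun _ => g1, False.elim⟩
    obtain ⟨j', q1, q2⟩ := step_all hn hadm hadap ⟨h1, h2⟩ False.elim s hcol hm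
    exact ⟨k, s, j', Or.inl ⟨k1, k2, q1.gen id,
      fun i hi hi' => (not_leD_iff _ _ _).2 (q1.adj i hi hi'), g3⟩, q2⟩
  · by_cases hj : j0 = n
    · subst hj
      obtain ⟨k', j', a1, a2, a3, a4, a5, a6, a7⟩ :=
        spin_n hn hadm hadap s hm k0 k1 k2 g1 g2
      exact ⟨k', s, j', Or.inr ⟨a1, a2, a3, a4, a5, a6 ▸ g3⟩, a7⟩
    · have hcol : ColOK n True k j := by
        refine ⟨fun i hi hi' => ?_, fun h => absurd trivial h, fun _ => ⟨k0, g1⟩⟩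
        by_cases hi1 : i = 1
        · subst hi1
          have := g1 2 le_rfl (by omega)
          left
          rw [k0]
          exact lt_of_lt_of_le (Nat.succ_pos n) this.1
        · exact Or.inl (g2 i (by omega) hi')
      obtain ⟨j', q1, q2⟩ := step_all hn hadm hadap ⟨h1, h2⟩ (fun _ => hj) s hcol hm
      obtain ⟨w1, w2⟩ := q1.spin trivial
      refine ⟨k, s, j', Or.inr ⟨w1, k1, k2, w2, fun i hi hi' => ?_, g3⟩, q2⟩
      have e1 := w2 i hi (by omega)
      have e2 := w2 (i+1) (by omega) (by omega)
      rcases q1.adj i (by omega) hi' with h | h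
      · exact h
      · omega

end TabDProof

/-- Proposition 4.4 (closure): for an adapted sequence of type D, the set `Tab_{D,ι}` is
closed under all operators `S_{m,j}`. -/
theorem Tab_D_closed (n : ℕ) (hn : 4 ≤ n) (ι : ℕ → ℕ)
    (hadm : Admissible n ι) (hadap : Adapted n (cartanD n) ι) :
    ∀ T ∈ TabD ι n, ∀ m j, 1 ≤ m → 1 ≤ j → j ≤ n →
      Ssj (cartanD n) ι m j T ∈ TabD ι n := by
  exact TabDProof.main n hn ι hadm hadap
end
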